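/- arXiv:0912.2909 — 2 statements merged into one kernel-verified Lean document; each statement's English description precedes it below -/
import Mathlib

section
/- The set of eigenvalues of the first-order boundary-value problem y'(x) = (λA(x) + B(x))y(x) on [a,b] with W_a y(a) + W_b y(b) = 0 is countably infinite, i.e., the set {λ ∈ ℂ : the problem has a nonzero continuously differentiable solution} is infinite and countable. -/
open Matrix

/-- `lam` is an eigenvalue of the boundary-value problem
`y' = (lam A + B) y` on `[a,b]`, `W_a y(a) + W_b y(b) = 0`:
there is a nonzero continuously differentiable solution. -/
def IsBVPEigenvalue (a b : ℝ) (A B : ℝ → Matrix (Fin 2) (Fin 2) ℂ)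
    (Wa Wb : Matrix (Fin 2) (Fin 2) ℂ) (lam : ℂ) : Prop :=
  ∃ y y' : ℝ → (Fin 2 → ℂ),
    (∀ x ∈ Set.Icc a b, HasDerivWithinAt y (y' x) (Set.Icc a b) x) ∧
    ContinuousOn y' (Set.Icc a b) ∧
    (∃ x ∈ Set.Icc a b, y x ≠ 0) ∧
    (∀ x ∈ Set.Icc a b, y' x = (lam • A x + B x).mulVec (y x)) ∧
    Wa.mulVec (y a) + Wb.mulVec (y b) = 0

section
open Filter Topology


/-- base case: a zero-free entire function of exponential type cannot grow in both real directions. -/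
lemma bvp_zero_free_false (f : ℂ → ℂ) (hf : Differentiable ℂ f) (h0 : ∀ z, f z ≠ 0)
    (C : ℝ) (hC : ∀ z, ‖f z‖ ≤ Real.exp (C * (1 + ‖z‖)))
    (R : ℝ) (hR : 0 < R)
    (h1 : ∀ᶠ x : ℝ in atTop, Real.exp (R * x) ≤ ‖f x‖)
    (h2 : ∀ᶠ x : ℝ in atTop, Real.exp (R * x) ≤ ‖f (-x)‖) : False := by
  have hd : Differentiable ℂ (deriv f) := hf.contDiff.differentiable_deriv_two
  have hdd : Differentiable ℂ (fun z => deriv f z / f z) := hd.div hf h0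
  obtain ⟨h, hh0, hh⟩ := hdd.isExactOn_univ.with_val_at 0 (Complex.log (f 0))
  have hexp : ∀ z, f z = Complex.exp (h z) := by
    have key : ∀ z, HasDerivAt (fun z => f z * Complex.exp (-h z)) 0 z := by
      intro z
      have := (hf z).hasDerivAt.mul ((hh z (Set.mem_univ _)).neg.cexp)
      refine this.congr_deriv ?_
      field_simp [h0 z]
      ring
    have hc : ∀ z, f z * Complex.exp (-h z) = f 0 * Complex.exp (-h 0) := fun z =>
      is_const_of_deriv_eq_zero (fun z => (key z).differentiableAt) (fun z => (key z).deriv) z 0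
    intro z
    have := hc z
    rw [hh0, Complex.exp_neg, Complex.exp_neg, Complex.exp_log (h0 0), mul_inv_cancel₀ (h0 0)] at this
    field_simp at this
    exact this
  have hhd : Differentiable ℂ h := fun z => (hh z (Set.mem_univ _)).differentiableAt
  have hre : ∀ z, (h z).re ≤ (|C| + 1) * (1 + ‖z‖) := by
    intro z
    have := hC z
    rw [hexp z, Complex.norm_exp, Real.exp_le_exp] at this
    refine this.trans ?_
    gcongr
    linarith [le_abs_self C]
  set D := |C| + 1 with hD
  have hDpos : 0 < D := by positivity
  set K := 4 * D + 3 * ‖h 0‖ with hK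
  have hKpos : 0 < K := by positivity
  have hbd : ∀ z, ‖h z‖ ≤ K * (1 + ‖z‖) := by
    intro z
    have hz1 : 0 < 1 + ‖z‖ := by positivity
    have := Complex.borelCaratheodory (f := h) (M := D * (1 + (2 * ‖z‖ + 1))) (R := 2 * ‖z‖ + 1) (z := z)
      (by positivity) hhd.differentiableOn ?_ (by positivity) ?_
    · refine this.trans ?_
      have e : 2 * ‖z‖ + 1 - ‖z‖ = 1 + ‖z‖ := by ring
      rw [e, ← add_div, div_le_iff₀ hz1]
      have := norm_nonneg z
      have := norm_nonneg (h 0)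
      rw [hK]
      nlinarith [mul_nonneg hDpos.le this, mul_nonneg ‹0 ≤ ‖z‖› this, mul_nonneg (mul_nonneg ‹0 ≤ ‖z‖› ‹0 ≤ ‖z‖›) this, mul_nonneg hDpos.le ‹0 ≤ ‖z‖›]
    · intro w hw
      simp only [Metric.mem_ball, dist_zero_right] at hw
      refine (hre w).trans ?_
      gcongr
    · simp only [Metric.mem_ball, dist_zero_right]
      linarith [norm_nonneg z]
  have hder : ∀ c, ‖deriv h c‖ ≤ 2 * K := by
    intro c
    have := Complex.norm_deriv_le_of_forall_mem_sphere_norm_le (f := h) (c := c) (R := 1 + ‖c‖)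
      (C := K * (1 + (‖c‖ + (1 + ‖c‖)))) (by positivity) hhd.diffContOnCl ?_
    · refine this.trans ?_
      rw [div_le_iff₀ (by positivity)]
      linarith
    · intro z hz
      refine (hbd z).trans ?_
      gcongr
      rw [mem_sphere_iff_norm] at hz
      calc ‖z‖ = ‖c + (z - c)‖ := by ring_nf
        _ ≤ _ := by rw [← hz]; exact norm_add_le _ _
  have hhdd : Differentiable ℂ (deriv h) := hhd.contDiff.differentiable_deriv_two
  have hcst : ∀ z, deriv h z = deriv h 0 := fun z =>
    hhdd.apply_eq_apply_of_bounded (isBounded_iff_forall_norm_le.2 ⟨2 * K, by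
      rintro _ ⟨z, rfl⟩; exact hder z⟩) z 0
  have hlin : ∀ z, h z = h 0 + deriv h 0 * z := by
    have key : ∀ z, HasDerivAt (fun z => h z - deriv h 0 * z) 0 z := by
      intro z
      have := (hhd z).hasDerivAt.sub ((hasDerivAt_id z).const_mul (deriv h 0))
      refine this.congr_deriv ?_
      rw [hcst z]; ring
    intro z
    have := is_const_of_deriv_eq_zero (fun z => (key z).differentiableAt) (fun z => (key z).deriv) z 0
    simp only [mul_zero, sub_zero] at this
    rw [← this]; ring
  have hbig : ∀ᶠ x : ℝ in atTop, (h 0).re < R * x :=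
    (tendsto_id.const_mul_atTop hR).eventually_gt_atTop _
  obtain ⟨x, e1, e2, e3⟩ := (h1.and (h2.and hbig)).exists
  rw [hexp, Complex.norm_exp, Real.exp_le_exp, hlin] at e1 e2
  simp only [Complex.add_re, mul_neg, Complex.neg_re] at e1 e2
  linarith

lemma bvp_pow_le_exp (n : ℕ) (w : ℂ) (R : ℝ) (hR : 0 < R) :
    ∀ᶠ x : ℝ in atTop, (|x| + ‖w‖) ^ n ≤ Real.exp (R * x) := by
  have h := (isLittleO_pow_exp_pos_mul_atTop (b := R / 2 ^ 0) n (by positivity)).bound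
    (c := (1 / 2 : ℝ) ^ n) (by positivity)
  filter_upwards [h, eventually_ge_atTop (‖w‖), eventually_ge_atTop 0] with x hx hw hx0
  simp only [Real.norm_eq_abs, Real.abs_exp, abs_pow, abs_of_nonneg hx0, pow_zero, div_one] at hx ⊢
  calc (x + ‖w‖) ^ n ≤ (2 * x) ^ n := by gcongr; linarith
    _ = 2 ^ n * x ^ n := by ring
    _ ≤ 2 ^ n * ((1 / 2) ^ n * Real.exp (R * x)) := by gcongr
    _ = Real.exp (R * x) := by rw [← mul_assoc, ← mul_pow]; norm_num

lemma bvp_finite_zeros_false (s : Finset ℂ) : ∀ (f : ℂ → ℂ), Differentiable ℂ f → 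
    (∀ z, f z = 0 → z ∈ s) →
    ∀ (C : ℝ), (∀ z, ‖f z‖ ≤ Real.exp (C * (1 + ‖z‖))) →
    ∀ (R : ℝ), 0 < R →
    (∀ᶠ x : ℝ in atTop, Real.exp (R * x) ≤ ‖f x‖) →
    (∀ᶠ x : ℝ in atTop, Real.exp (R * x) ≤ ‖f (-x)‖) → False := by
  induction s using Finset.induction_on with
  | empty =>
    intro f hf h0 C hC R hR h1 h2
    exact bvp_zero_free_false f hf (fun z hz => by simpa using h0 z hz) C hC R hR h1 h2
  | insert z₀ s hz₀ ih =>
    intro f hf h0 C hC R hR h1 h2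
    have hfa : AnalyticOnNhd ℂ f Set.univ := hf.differentiableOn.analyticOnNhd isOpen_univ
    have hne : ¬ ∀ᶠ z in 𝓝 z₀, f z = 0 := by
      intro h
      have := hfa.eqOn_zero_of_preconnected_of_eventuallyEq_zero isPreconnected_univ
        (Set.mem_univ z₀) h
      obtain ⟨x, hx⟩ := h1.exists
      rw [this (Set.mem_univ _)] at hx
      simp at hx
      linarith [Real.exp_pos (R * x)]
    obtain ⟨n, g, hg, hg0, hfg⟩ := ((hfa z₀ (Set.mem_univ _)).exists_eventuallyEq_pow_smul_nonzero_iff).2 hne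
    let G : ℂ → ℂ := fun z => if z = z₀ then g z₀ else f z / (z - z₀) ^ n
    have hGne : ∀ z, z ≠ z₀ → G z = f z / (z - z₀) ^ n := fun z hz => if_neg hz
    have hG0 : G z₀ = g z₀ := if_pos rfl
    have hGd : Differentiable ℂ G := by
      intro z
      by_cases hz : z = z₀
      · subst hz
        refine hg.differentiableAt.congr_of_eventuallyEq ?_
        filter_upwards [hfg] with w hw
        by_cases hwz : w = z
        · rw [hwz, hG0]
        · rw [hGne w hwz, hw, smul_eq_mul]
          have : w - z ≠ 0 := sub_ne_zero.2 hwz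
          field_simp
      · have : DifferentiableAt ℂ (fun z => f z / (z - z₀) ^ n) z := by
          refine (hf z).div (by fun_prop) (pow_ne_zero _ (sub_ne_zero.2 hz))
        refine this.congr_of_eventuallyEq ?_
        filter_upwards [isOpen_ne.mem_nhds hz] with w hw
        exact hGne w hw
    have hGz : ∀ z, G z = 0 → z ∈ s := by
      intro z hz
      have hzz : z ≠ z₀ := by rintro rfl; exact hg0 (hG0 ▸ hz)
      rw [hGne z hzz, div_eq_zero_iff] at hz
      rcases hz with hz | hz
      · exact (Finset.mem_insert.1 (h0 z hz)).resolve_left hzz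
      · exact absurd hz (pow_ne_zero _ (sub_ne_zero.2 hzz))
    obtain ⟨M, hM⟩ := (isCompact_closedBall z₀ 1).exists_bound_of_continuousOn hGd.continuous.continuousOn
    have hGC : ∀ z, ‖G z‖ ≤ Real.exp ((|C| + |M|) * (1 + ‖z‖)) := by
      intro z
      have hz := norm_nonneg z
      by_cases hz1 : ‖z - z₀‖ ≤ 1
      · refine (hM z (by simpa [dist_eq_norm] using hz1)).trans ?_
        have : |M| ≤ (|C| + |M|) * (1 + ‖z‖) := by
          nlinarith [abs_nonneg C, abs_nonneg M, mul_nonneg (abs_nonneg C) hz, mul_nonneg (abs_nonneg M) hz]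
        linarith [le_abs_self M, Real.add_one_le_exp ((|C| + |M|) * (1 + ‖z‖))]
      · push Not at hz1
        have hzz : z ≠ z₀ := by rintro rfl; simp at hz1; linarith
        rw [hGne z hzz, norm_div, norm_pow]
        refine (div_le_self (norm_nonneg _) (one_le_pow₀ hz1.le)).trans ((hC z).trans ?_)
        gcongr
        linarith [le_abs_self C, abs_nonneg M]
    have hlow : ∀ (e : ℝ → ℂ), (∀ x, ‖e x‖ = |x|) → (∀ᶠ x : ℝ in atTop, Real.exp (R * x) ≤ ‖f (e x)‖) →
        (∀ᶠ x : ℝ in atTop, Real.exp (R / 2 * x) ≤ ‖G (e x)‖) := by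
      intro e he h
      filter_upwards [h, bvp_pow_le_exp n z₀ (R / 2) (by positivity), eventually_gt_atTop ‖z₀‖] with x hx hp hxz
      have hzz : e x ≠ z₀ := by
        intro h
        have := he x
        rw [h] at this
        linarith [le_abs_self x]
      have hpos : 0 < ‖e x - z₀‖ := norm_pos_iff.2 (sub_ne_zero.2 hzz)
      rw [hGne _ hzz, norm_div, norm_pow, le_div_iff₀ (by positivity)]
      refine le_trans ?_ hx
      have : R * x = R / 2 * x + R / 2 * x := by ring
      rw [this, Real.exp_add]
      gcongr
      refine le_trans ?_ hp
      gcongr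
      rw [← he x]
      exact norm_sub_le _ _
    exact ih G hGd hGz _ hGC (R / 2) (by positivity) (hlow (fun x => x) (by simp) h1)
      (hlow (fun x => -x) (by simp) h2)

lemma bvp_zeros_infinite_countable (f : ℂ → ℂ) (hf : Differentiable ℂ f)
    (C : ℝ) (hC : ∀ z, ‖f z‖ ≤ Real.exp (C * (1 + ‖z‖)))
    (R : ℝ) (hR : 0 < R)
    (h1 : ∀ᶠ x : ℝ in atTop, Real.exp (R * x) ≤ ‖f x‖)
    (h2 : ∀ᶠ x : ℝ in atTop, Real.exp (R * x) ≤ ‖f (-x)‖) :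
    {z | f z = 0}.Infinite ∧ {z | f z = 0}.Countable := by
  constructor
  · intro hfin
    exact bvp_finite_zeros_false hfin.toFinset f hf (fun z hz => by simpa using hz) C hC R hR h1 h2
  · have hfa : AnalyticOnNhd ℂ f Set.univ := hf.differentiableOn.analyticOnNhd isOpen_univ
    obtain ⟨x, hx⟩ := h1.exists
    have hx0 : f x ≠ 0 := by
      intro h
      rw [h] at hx
      simp at hx
      linarith [Real.exp_pos (R * x)]
    have := hfa.preimage_zero_mem_codiscrete (x := (x : ℂ)) hx0
    have hs : {z | f z = 0} = (f ⁻¹' {0}) := rfl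
    rw [hs]
    apply (HereditarilyLindelofSpace.isLindelof _).countable_of_isDiscrete
    have h3 := isDiscrete_of_codiscreteWithin (X := ℂ) (U := Set.univ) (s := f ⁻¹' {0}) this
    simpa using h3


/-- Functions polynomial in the parameter with continuous coefficients. -/
def BvpGood {𝔸 : Type*} [NormedRing 𝔸] [NormedAlgebra ℂ 𝔸] (f : ℂ → ℝ → 𝔸) : Prop :=
  ∃ N : ℕ, ∃ c : ℕ → ℝ → 𝔸, (∀ k, Continuous (c k)) ∧
    ∀ l x, f l x = ∑ k ∈ Finset.range N, l ^ k • c k x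

lemma BvpGood.continuous {𝔸 : Type*} [NormedRing 𝔸] [NormedAlgebra ℂ 𝔸] {f : ℂ → ℝ → 𝔸}
    (h : BvpGood f) (l : ℂ) : Continuous (f l) := by
  obtain ⟨N, c, hc, hf⟩ := h
  rw [funext (hf l)]
  fun_prop

lemma BvpGood.differentiable {𝔸 : Type*} [NormedRing 𝔸] [NormedAlgebra ℂ 𝔸] {f : ℂ → ℝ → 𝔸}
    (h : BvpGood f) (x : ℝ) : Differentiable ℂ (fun l => f l x) := by
  obtain ⟨N, c, hc, hf⟩ := h
  rw [funext (fun l => hf l x)]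
  fun_prop

lemma BvpGood.step {𝔸 : Type*} [NormedRing 𝔸] [NormedAlgebra ℂ 𝔸] [CompleteSpace 𝔸] {f : ℂ → ℝ → 𝔸}
    (h : BvpGood f) (a : ℝ) (A B : ℝ → 𝔸) (hA : Continuous A) (hB : Continuous B) :
    BvpGood (fun l x => ∫ t in a..x, (l • A t + B t) * f l t) := by
  obtain ⟨N, c, hc, hf⟩ := h
  refine ⟨N + 1, fun k x => (∫ t in a..x, (if k = 0 then 0 else A t * c (k - 1) t)) +
      (∫ t in a..x, (if k = N then 0 else B t * c k t)), ?_, ?_⟩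
  · intro k
    refine Continuous.add ?_ ?_
    · refine intervalIntegral.continuous_primitive (fun u v => Continuous.intervalIntegrable ?_ _ _) _
      split_ifs
      · fun_prop
      · have := hc (k - 1); fun_prop
    · refine intervalIntegral.continuous_primitive (fun u v => Continuous.intervalIntegrable ?_ _ _) _
      split_ifs
      · fun_prop
      · have := hc k; fun_prop
  · intro l x
    simp only [smul_add, Finset.sum_add_distrib]
    rw [Finset.sum_range_succ', Finset.sum_range_succ]
    simp only [if_true, intervalIntegral.integral_zero, smul_zero, add_zero, Nat.succ_ne_zero, if_false,
      Nat.add_sub_cancel]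
    have e1 : ∀ k ∈ Finset.range N, (∫ t in a..x, (if k = N then 0 else B t * c k t)) = ∫ t in a..x, B t * c k t := by
      intro k hk
      simp only [if_neg (Finset.mem_range.1 hk).ne]
    have e2 : (∑ k ∈ Finset.range N, l ^ k • ∫ t in a..x, (if k = N then 0 else B t * c k t)) =
        ∑ k ∈ Finset.range N, l ^ k • ∫ t in a..x, B t * c k t :=
      Finset.sum_congr rfl (fun k hk => by rw [e1 k hk])
    rw [e2]
    simp only [← intervalIntegral.integral_smul]
    rw [← intervalIntegral.integral_finsetSum, ← intervalIntegral.integral_finsetSum, ← intervalIntegral.integral_add]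
    · refine intervalIntegral.integral_congr (fun t _ => ?_)
      simp only [hf, add_mul, Finset.mul_sum]
      rw [← Finset.sum_add_distrib]
      refine Finset.sum_congr rfl fun k _ => ?_
      rw [smul_mul_smul_comm, pow_succ', mul_smul_comm]
    all_goals first
      | exact Continuous.intervalIntegrable (by fun_prop) _ _
      | exact fun i _ => Continuous.intervalIntegrable (by fun_prop) _ _

noncomputable def bvpIter {𝔸 : Type*} [NormedRing 𝔸] [NormedAlgebra ℂ 𝔸] (a : ℝ) (A B : ℝ → 𝔸) :
    ℕ → ℂ → ℝ → 𝔸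
  | 0 => fun _ _ => 1
  | n + 1 => fun l x => ∫ t in a..x, (l • A t + B t) * bvpIter a A B n l t

lemma bvp_linear_ode {𝔸 : Type*} [NormedRing 𝔸] [NormedAlgebra ℂ 𝔸] [CompleteSpace 𝔸] [NormOneClass 𝔸]
    (a : ℝ) (A B : ℝ → 𝔸) (hA : Continuous A) (hB : Continuous B) (K : ℝ)
    (hAK : ∀ x, ‖A x‖ ≤ K) (hBK : ∀ x, ‖B x‖ ≤ K) :
    ∃ Y : ℂ → ℝ → 𝔸, (∀ l, Y l a = 1) ∧
      (∀ l x, HasDerivAt (Y l) ((l • A x + B x) * Y l x) x) ∧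
      (∀ x, Differentiable ℂ (fun l => Y l x)) ∧
      (∀ l x, ‖Y l x‖ ≤ Real.exp (K * (1 + ‖l‖) * |x - a|)) := by
  have hK : 0 ≤ K := (norm_nonneg _).trans (hAK a)
  set F := bvpIter a A B with hF
  have hF0 : ∀ l x, F 0 l x = 1 := fun _ _ => rfl
  have hFs : ∀ n l x, F (n + 1) l x = ∫ t in a..x, (l • A t + B t) * F n l t := fun _ _ _ => rfl
  have hgood : ∀ n, BvpGood (F n) := by
    intro n
    induction n with
    | zero => exact ⟨1, fun _ _ => 1, fun _ => continuous_const, fun l x => by simp [hF0]⟩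
    | succ n ih => exact ih.step a A B hA hB
  have hM : ∀ (l : ℂ) (x : ℝ), ‖l • A x + B x‖ ≤ K * (1 + ‖l‖) := by
    intro l x
    calc ‖l • A x + B x‖ ≤ ‖l‖ * ‖A x‖ + ‖B x‖ := (norm_add_le _ _).trans (by rw [norm_smul l (A x)])
      _ ≤ ‖l‖ * K + K := by exact add_le_add (mul_le_mul_of_nonneg_left (hAK x) (norm_nonneg _)) (hBK x)
      _ = _ := by ring
  have hbd : ∀ n l x, ‖F n l x‖ ≤ (K * (1 + ‖l‖) * |x - a|) ^ n / n.factorial := by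
    intro n l
    induction n with
    | zero => intro x; simp [hF0]
    | succ n ih =>
      intro x
      rw [hFs]
      refine intervalIntegral.norm_integral_le_integral_norm_uIoc.trans ?_
      have hc := (hgood n).continuous l
      calc ∫ t in Set.uIoc a x, ‖(l • A t + B t) * F n l t‖
          ≤ ∫ t in Set.uIoc a x, ((K * (1 + ‖l‖)) ^ (n + 1) / n.factorial) * |t - a| ^ n := by
            refine MeasureTheory.integral_mono_of_nonneg (Eventually.of_forall fun t => norm_nonneg _) ?_
              (Eventually.of_forall fun t => ?_)
            · refine (Continuous.intervalIntegrable (μ := MeasureTheory.volume) (a := a) (b := x) ?_ ).def'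
              fun_prop
            · calc ‖(l • A t + B t) * F n l t‖ ≤ (K * (1 + ‖l‖)) * ((K * (1 + ‖l‖) * |t - a|) ^ n / n.factorial) :=
                    (norm_mul_le _ _).trans (mul_le_mul (hM l t) (ih t) (norm_nonneg _) (by positivity))
                _ = _ := by rw [mul_pow]; ring
        _ = _ := by
            rw [MeasureTheory.integral_const_mul, integral_pow_abs_sub_uIoc, Nat.factorial_succ, mul_pow _ |x - a|]
            push_cast
            field_simp
  have hFd : ∀ n l x, HasDerivAt (F (n + 1) l) ((l • A x + B x) * F n l x) x := by
    intro n l x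
    have hc := (hgood n).continuous l
    have hcc : Continuous (fun t => (l • A t + B t) * F n l t) := by fun_prop
    exact intervalIntegral.integral_hasDerivAt_right (hcc.intervalIntegrable _ _)
      (hcc.stronglyMeasurableAtFilter _ _) hcc.continuousAt
  have hsum : ∀ l x, Summable (fun n => F n l x) := fun l x =>
    Summable.of_norm_bounded (Real.summable_pow_div_factorial _) (fun n => hbd n l x)
  refine ⟨fun l x => ∑' n, F n l x, ?_, ?_, ?_, ?_⟩
  · intro l
    change ∑' n, F n l a = 1
    rw [tsum_eq_single 0]
    · rfl
    · intro n hn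
      obtain ⟨m, rfl⟩ := Nat.exists_eq_succ_of_ne_zero hn
      simp [hFs]
  · intro l x
    set r := |x - a| + 1 with hr
    have key := hasDerivAt_tsum_of_isPreconnected (𝕜 := ℝ) (t := Metric.ball a r) (y₀ := a) (y := x)
      (g := fun n => F (n + 1) l) (g' := fun n y => (l • A y + B y) * F n l y)
      (u := fun n => (K * (1 + ‖l‖)) * ((K * (1 + ‖l‖) * r) ^ n / n.factorial))
      ((Real.summable_pow_div_factorial _).mul_left _) Metric.isOpen_ball (convex_ball a r).isPreconnected
      (fun n y _ => hFd n l y) ?_ (Metric.mem_ball_self (by positivity))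
      ((summable_nat_add_iff 1).2 (hsum l a)) (by rw [Metric.mem_ball, Real.dist_eq]; linarith)
    · rw [(hsum l x).tsum_mul_left] at key
      have e : (fun z => ∑' n, F n l z) = fun z => 1 + ∑' n, F (n + 1) l z := by
        funext z
        rw [(hsum l z).tsum_eq_zero_add, hF0]
      change HasDerivAt (fun z => ∑' n, F n l z) ((l • A x + B x) * ∑' n, F n l x) x
      have k2 := key.const_add 1
      rw [← e] at k2
      exact k2
    · intro n y hy
      rw [Metric.mem_ball, Real.dist_eq] at hy
      refine (norm_mul_le _ _).trans (mul_le_mul (hM l y) ((hbd n l y).trans ?_) (norm_nonneg _) (by positivity))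
      gcongr
  · intro x l
    have := Complex.differentiableOn_tsum_of_summable_norm (U := Metric.ball 0 (‖l‖ + 1)) (F := fun n l => F n l x)
      (u := fun n => (K * (1 + (‖l‖ + 1)) * |x - a|) ^ n / n.factorial)
      (Real.summable_pow_div_factorial _) (fun n => ((hgood n).differentiable x).differentiableOn) Metric.isOpen_ball ?_
    · exact this.differentiableAt (Metric.isOpen_ball.mem_nhds (by simp))
    · intro n w hw
      simp only [Metric.mem_ball, dist_zero_right] at hw
      refine (hbd n w x).trans ?_
      gcongr
  · intro l x
    rw [Real.exp_eq_exp_ℝ, NormedSpace.exp_eq_tsum_div]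
    exact tsum_of_norm_bounded (Real.summable_pow_div_factorial _).hasSum (fun n => hbd n l x)


lemma bvp_energy_z2 (a b : ℝ) (z1 z2 q d : ℝ → ℂ) (M N S : ℝ) (hM : 0 ≤ M) (hN : 0 < N)
    (hS0 : 0 ≤ S)
    (h2 : ∀ x, HasDerivAt z2 (q x * z1 x - d x * z2 x) x)
    (hq : ∀ x, ‖q x‖ ≤ M) (hd : ∀ x, N ≤ (d x).re)
    (hS : ∀ x ∈ Set.Icc a b, ‖z1 x‖ ≤ S) :
    ∀ x ∈ Set.Icc a b, ‖z2 x‖ ≤ ‖z2 a‖ * Real.exp (-(N / 2) * (x - a)) + M * S / N := by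
  intro x hx
  have hder : ∀ x, HasDerivAt (fun x => Real.exp (N * (x - a)) * (‖z2 x‖ ^ 2 - (M * S / N) ^ 2))
      (Real.exp (N * (x - a)) * N * (‖z2 x‖ ^ 2 - (M * S / N) ^ 2) + Real.exp (N * (x - a)) *
        (2 * inner ℝ (z2 x) (q x * z1 x - d x * z2 x))) x := by
    intro x
    have e1 : HasDerivAt (fun x => Real.exp (N * (x - a))) (Real.exp (N * (x - a)) * N) x := by
      have := (((hasDerivAt_id x).sub_const a).const_mul N).exp
      simpa using this
    exact e1.mul ((h2 x).norm_sq.sub_const _)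
  have hanti : AntitoneOn (fun x => Real.exp (N * (x - a)) * (‖z2 x‖ ^ 2 - (M * S / N) ^ 2)) (Set.Icc a b) := by
    refine antitoneOn_of_deriv_nonpos (convex_Icc a b) (fun x _ => (hder x).continuousAt.continuousWithinAt)
      (fun x _ => (hder x).differentiableAt.differentiableWithinAt) ?_
    intro x hx
    rw [interior_Icc] at hx
    rw [(hder x).deriv]
    have hi : inner ℝ (z2 x) (q x * z1 x - d x * z2 x) ≤ M * S * ‖z2 x‖ - N * ‖z2 x‖ ^ 2 := by
      rw [inner_sub_right]
      have i1 : inner ℝ (z2 x) (q x * z1 x) ≤ M * S * ‖z2 x‖ := by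
        refine (real_inner_le_norm _ _).trans ?_
        rw [norm_mul, mul_comm]
        gcongr
        · exact hq x
        · exact hS x ⟨hx.1.le, hx.2.le⟩
      have i2 : inner ℝ (z2 x) (d x * z2 x) = (d x).re * ‖z2 x‖ ^ 2 := by
        rw [Complex.inner, Complex.sq_norm, Complex.normSq_apply]
        simp
        ring
      have i3 : N * ‖z2 x‖ ^ 2 ≤ (d x).re * ‖z2 x‖ ^ 2 := by gcongr; exact hd x
      linarith
    have hE := Real.exp_pos (N * (x - a))
    have : N * (‖z2 x‖ ^ 2 - (M * S / N) ^ 2) + 2 * (M * S * ‖z2 x‖ - N * ‖z2 x‖ ^ 2)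
        = - (N * (‖z2 x‖ - M * S / N) ^ 2) := by field_simp; ring
    have h3 : 0 ≤ N * (‖z2 x‖ - M * S / N) ^ 2 := by positivity
    rw [mul_assoc, ← mul_add]
    exact mul_nonpos_of_nonneg_of_nonpos hE.le (by linarith)
  have h := hanti (Set.left_mem_Icc.2 (hx.1.trans hx.2)) hx hx.1
  simp only [sub_self, mul_zero, Real.exp_zero, one_mul] at h
  set E := Real.exp (-(N / 2) * (x - a)) with hE
  have hEpos : 0 < E := Real.exp_pos _
  have hEE : Real.exp (N * (x - a)) * (E * E) = 1 := by
    rw [hE, ← Real.exp_add, ← Real.exp_add, ← Real.exp_zero]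
    congr 1; ring
  set V := M * S / N with hV
  have hV0 : 0 ≤ V := by positivity
  have h4 : ‖z2 x‖ ^ 2 - V ^ 2 ≤ (‖z2 a‖ ^ 2 - V ^ 2) * (E * E) := by
    have := mul_le_mul_of_nonneg_right h (mul_pos hEpos hEpos).le
    nlinarith
  refine (pow_le_pow_iff_left₀ (norm_nonneg _) (by positivity) two_ne_zero).1 ?_
  have : 0 ≤ V ^ 2 * (E * E) := by positivity
  have : 0 ≤ ‖z2 a‖ * E * V := by positivity
  nlinarith

lemma bvp_energy_z1 (a b : ℝ) (hab : a < b) (z1 z2 p q d : ℝ → ℂ) (M N S : ℝ) (hM : 0 ≤ M) (hN : 0 < N)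
    (hS0 : 0 ≤ S)
    (h1 : ∀ x, HasDerivAt z1 (p x * z2 x) x)
    (h2 : ∀ x, HasDerivAt z2 (q x * z1 x - d x * z2 x) x)
    (hp : ∀ x, ‖p x‖ ≤ M) (hq : ∀ x, ‖q x‖ ≤ M) (hd : ∀ x, N ≤ (d x).re)
    (hS : ∀ x ∈ Set.Icc a b, ‖z1 x‖ ≤ S) :
    ∀ x ∈ Set.Icc a b, ‖z1 x - z1 a‖ ≤ M * (2 * ‖z2 a‖ / N + (b - a) * (M * S / N)) := by
  intro x hx
  have hz2 := bvp_energy_z2 a b z1 z2 q d M N S hM hN hS0 h2 hq hd hS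
  have hBd : ∀ x, HasDerivAt (fun x => M * (‖z2 a‖ * (2 / N) * (1 - Real.exp (-(N / 2) * (x - a))) + (x - a) * (M * S / N)))
      (M * (‖z2 a‖ * Real.exp (-(N / 2) * (x - a)) + M * S / N)) x := by
    intro x
    have e1 : HasDerivAt (fun x => Real.exp (-(N / 2) * (x - a))) (Real.exp (-(N / 2) * (x - a)) * (-(N / 2))) x := by
      have := (((hasDerivAt_id x).sub_const a).const_mul (-(N / 2))).exp
      simpa using this
    have := (((e1.const_sub 1).const_mul (‖z2 a‖ * (2 / N))).add
      (((hasDerivAt_id x).sub_const a).mul_const (M * S / N))).const_mul M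
    refine this.congr_deriv ?_
    field_simp
  have := image_norm_le_of_norm_deriv_right_le_deriv_boundary (a := a) (b := b) (f := fun x => z1 x - z1 a)
    (f' := fun x => p x * z2 x)
    (fun x _ => ((h1 x).sub_const _).continuousAt.continuousWithinAt)
    (fun x _ => ((h1 x).sub_const _).hasDerivWithinAt) (by simp) hBd ?_ hx
  · refine this.trans ?_
    refine mul_le_mul_of_nonneg_left (add_le_add ?_ ?_) hM
    · have : 0 ≤ ‖z2 a‖ * (2 / N) := by positivity
      have e : 0 < Real.exp (-(N / 2) * (x - a)) := Real.exp_pos _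
      calc _ ≤ ‖z2 a‖ * (2 / N) * 1 := by gcongr; linarith
        _ = _ := by ring
    · gcongr; exact hx.2
  · intro x hx
    rw [norm_mul]
    exact mul_le_mul (hp x) (hz2 x ⟨hx.1, hx.2.le⟩) (norm_nonneg _) hM

lemma bvp_energy (a b : ℝ) (hab : a < b) (M : ℝ) (hM : 0 ≤ M) : ∃ C N₀ : ℝ,
    ∀ (z1 z2 p q d : ℝ → ℂ) (N : ℝ), N₀ ≤ N → 0 < N →
    (∀ x, HasDerivAt z1 (p x * z2 x) x) →
    (∀ x, HasDerivAt z2 (q x * z1 x - d x * z2 x) x) →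
    (∀ x, ‖p x‖ ≤ M) → (∀ x, ‖q x‖ ≤ M) → (∀ x, N ≤ (d x).re) →
    ‖z1 a‖ ≤ 1 → ‖z2 a‖ ≤ 1 → ‖z1 b - z1 a‖ ≤ C / N ∧ ‖z2 b‖ ≤ C / N := by
  have hba : 0 < b - a := by linarith
  refine ⟨M * (2 + (b - a) * (M * (2 + 4 * M))) + (2 / (b - a) + M * (2 + 4 * M)), 1 + 2 * M ^ 2 * (b - a), ?_⟩
  intro z1 z2 p q d N hN0 hN h1 h2 hp hq hd hz1 hz2
  obtain ⟨x0, hx0, hmax⟩ := isCompact_Icc.exists_isMaxOn (Set.nonempty_Icc.2 hab.le)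
    (f := fun x => ‖z1 x‖) (s := Set.Icc a b) (fun x _ => (h1 x).continuousAt.norm.continuousWithinAt)
  set S := ‖z1 x0‖ with hSdef
  have hS0 : 0 ≤ S := norm_nonneg _
  have hS : ∀ x ∈ Set.Icc a b, ‖z1 x‖ ≤ S := fun x hx => hmax hx
  have k1 := bvp_energy_z1 a b hab z1 z2 p q d M N S hM hN hS0 h1 h2 hp hq hd hS
  have k2 := bvp_energy_z2 a b z1 z2 q d M N S hM hN hS0 h2 hq hd hS
  have hM2 : 0 ≤ 2 * M ^ 2 * (b - a) := by positivity
  have hN1 : 1 ≤ N := by linarith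
  have hSle : S ≤ 2 + 4 * M := by
    have e1 : S ≤ ‖z1 a‖ + ‖z1 x0 - z1 a‖ := by
      calc S = ‖z1 a + (z1 x0 - z1 a)‖ := by rw [hSdef]; congr 1; ring
        _ ≤ _ := norm_add_le _ _
    have e2 := k1 x0 hx0
    have e3 : M * (2 * ‖z2 a‖ / N + (b - a) * (M * S / N)) ≤ 2 * M + S / 2 := by
      rw [mul_add]
      refine add_le_add ?_ ?_
      · have : 2 * ‖z2 a‖ / N ≤ 2 := by
          rw [div_le_iff₀ hN]; nlinarith
        nlinarith
      · have : M * ((b - a) * (M * S / N)) = (M ^ 2 * (b - a)) * S / N := by ring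
        rw [this, div_le_iff₀ hN]
        nlinarith
    linarith
  have hC1 : 0 ≤ M * (2 + (b - a) * (M * (2 + 4 * M))) := by positivity
  have hC2 : 0 ≤ 2 / (b - a) + M * (2 + 4 * M) := by positivity
  constructor
  · refine (k1 b (Set.right_mem_Icc.2 hab.le)).trans ?_
    calc _ = M * (2 * ‖z2 a‖ + (b - a) * (M * S)) / N := by ring
      _ ≤ M * (2 * 1 + (b - a) * (M * (2 + 4 * M))) / N := by gcongr
      _ ≤ _ := by gcongr; linarith
  · refine (k2 b (Set.right_mem_Icc.2 hab.le)).trans ?_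
    have e : Real.exp (-(N / 2) * (b - a)) ≤ 2 / (b - a) / N := by
      have : -(N / 2) * (b - a) = -(N / 2 * (b - a)) := by ring
      rw [this, Real.exp_neg]
      have h5 : N / 2 * (b - a) ≤ Real.exp (N / 2 * (b - a)) := by
        linarith [Real.add_one_le_exp (N / 2 * (b - a))]
      calc (Real.exp (N / 2 * (b - a)))⁻¹ ≤ (N / 2 * (b - a))⁻¹ := by gcongr
        _ = _ := by field_simp
    calc _ ≤ 1 * (2 / (b - a) / N) + M * (2 + 4 * M) / N := by gcongr
      _ = (2 / (b - a) + M * (2 + 4 * M)) / N := by ring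
      _ ≤ _ := div_le_div_of_nonneg_right (by linarith) hN.le

lemma bvp_lower (a b : ℝ) (hab : a < b) (r1 r2 : ℝ → ℝ) (hr1 : Continuous r1) (hr2 : Continuous r2)
    (s : ℝ) (hs : 0 < s) (hsr1 : ∀ x, s ≤ r1 x) (hsr2 : ∀ x, s ≤ r2 x)
    (k11 k12 k21 k22 : ℝ → ℂ) (hk11 : Continuous k11) (hk22 : Continuous k22)
    (M : ℝ) (hM11 : ∀ x, ‖k11 x‖ ≤ M) (hM12 : ∀ x, ‖k12 x‖ ≤ M) (hM21 : ∀ x, ‖k21 x‖ ≤ M)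
    (hM22 : ∀ x, ‖k22 x‖ ≤ M)
    (y11 y12 y21 y22 : ℝ → ℝ → ℂ)
    (i11 : ∀ m, y11 m a = 1) (i12 : ∀ m, y12 m a = 0) (i21 : ∀ m, y21 m a = 0) (i22 : ∀ m, y22 m a = 1)
    (d11 : ∀ m x, HasDerivAt (y11 m) (((m * r1 x : ℝ) + k11 x) * y11 m x + k12 x * y21 m x) x)
    (d21 : ∀ m x, HasDerivAt (y21 m) (k21 x * y11 m x + (-(m * r2 x : ℝ) + k22 x) * y21 m x) x)
    (d12 : ∀ m x, HasDerivAt (y12 m) (((m * r1 x : ℝ) + k11 x) * y12 m x + k12 x * y22 m x) x)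
    (d22 : ∀ m x, HasDerivAt (y22 m) (k21 x * y12 m x + (-(m * r2 x : ℝ) + k22 x) * y22 m x) x)
    (u11 u12 u21 u22 v11 v12 v21 v22 : ℂ) (hw : v11 * u22 - u12 * v21 ≠ 0) :
    ∃ R : ℝ, 0 < R ∧ ∀ᶠ m : ℝ in atTop, Real.exp (R * m) ≤
      ‖(u11 + (v11 * y11 m b + v12 * y21 m b)) * (u22 + (v21 * y12 m b + v22 * y22 m b)) -
        (u12 + (v11 * y12 m b + v12 * y22 m b)) * (u21 + (v21 * y11 m b + v22 * y21 m b))‖ := by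
  have hM : 0 ≤ M := (norm_nonneg _).trans (hM11 a)
  have hba : 0 < b - a := by linarith
  -- primitives
  set g1 : ℝ → ℝ := fun x => ∫ t in a..x, r1 t with hg1
  set g2 : ℝ → ℝ := fun x => ∫ t in a..x, r2 t with hg2
  set β1 : ℝ → ℂ := fun x => ∫ t in a..x, k11 t with hβ1
  set β2 : ℝ → ℂ := fun x => ∫ t in a..x, k22 t with hβ2
  have dg1 : ∀ x, HasDerivAt g1 (r1 x) x := fun x => intervalIntegral.integral_hasDerivAt_right
    (hr1.intervalIntegrable _ _) (hr1.stronglyMeasurableAtFilter _ _) hr1.continuousAt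
  have dg2 : ∀ x, HasDerivAt g2 (r2 x) x := fun x => intervalIntegral.integral_hasDerivAt_right
    (hr2.intervalIntegrable _ _) (hr2.stronglyMeasurableAtFilter _ _) hr2.continuousAt
  have dβ1 : ∀ x, HasDerivAt β1 (k11 x) x := fun x => intervalIntegral.integral_hasDerivAt_right
    (hk11.intervalIntegrable _ _) (hk11.stronglyMeasurableAtFilter _ _) hk11.continuousAt
  have dβ2 : ∀ x, HasDerivAt β2 (k22 x) x := fun x => intervalIntegral.integral_hasDerivAt_right
    (hk22.intervalIntegrable _ _) (hk22.stronglyMeasurableAtFilter _ _) hk22.continuousAt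
  have g1a : g1 a = 0 := by simp [hg1]
  have g2a : g2 a = 0 := by simp [hg2]
  have β1a : β1 a = 0 := by simp [hβ1]
  have β2a : β2 a = 0 := by simp [hβ2]
  have hpos : ∀ r : ℝ → ℝ, Continuous r → (∀ x, s ≤ r x) → 0 < ∫ t in a..b, r t := by
    intro r hr hsr
    exact intervalIntegral.intervalIntegral_pos_of_pos (hr.intervalIntegrable _ _)
      (fun x => lt_of_lt_of_le hs (hsr x)) hab
  have g1b : 0 < g1 b := hpos r1 hr1 hsr1
  have g2b : 0 < g2 b := hpos r2 hr2 hsr2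
  -- exponentials
  set P : ℝ → ℝ → ℂ := fun m x => Complex.exp (-((m * g1 x : ℝ) + β1 x)) with hP
  have dP : ∀ m x, HasDerivAt (P m) (-((m * r1 x : ℝ) + k11 x) * P m x) x := by
    intro m x
    have := ((((dg1 x).const_mul m).ofReal_comp).add (dβ1 x)).neg.cexp
    refine this.congr_deriv ?_
    rw [mul_comm]
    rfl
  have Pa : ∀ m, P m a = 1 := by intro m; simp [hP, g1a, β1a]
  have hbase := bvp_energy a b hab M hM
  obtain ⟨C, N₀, hE⟩ := hbase
  have hlim : Tendsto (fun m : ℝ => 2 * s * m - 2 * M) atTop atTop :=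
    tendsto_atTop_add_const_right _ _ (tendsto_id.const_mul_atTop (by positivity))
  have hCl : Tendsto (fun m : ℝ => C / (2 * s * m - 2 * M)) atTop (𝓝 0) := hlim.const_div_atTop C
  have hcol : ∀ (f1 f2 : ℝ → ℝ → ℂ) (c1 c2 : ℂ), ‖c1‖ ≤ 1 → ‖c2‖ ≤ 1 → (∀ m, f1 m a = c1) → (∀ m, f2 m a = c2) →
      (∀ m x, HasDerivAt (f1 m) (((m * r1 x : ℝ) + k11 x) * f1 m x + k12 x * f2 m x) x) →
      (∀ m x, HasDerivAt (f2 m) (k21 x * f1 m x + (-(m * r2 x : ℝ) + k22 x) * f2 m x) x) →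
      Tendsto (fun m => f1 m b * P m b) atTop (𝓝 c1) ∧ Tendsto (fun m => f2 m b * P m b) atTop (𝓝 0) := by
    intro f1 f2 c1 c2 hc1 hc2 hf1 hf2 df1 df2
    have key : ∀ᶠ m : ℝ in atTop, ‖f1 m b * P m b - c1‖ ≤ C / (2 * s * m - 2 * M) ∧
        ‖f2 m b * P m b‖ ≤ C / (2 * s * m - 2 * M) := by
      filter_upwards [hlim.eventually_ge_atTop N₀, hlim.eventually_gt_atTop 0, eventually_ge_atTop 0] with m hm1 hm2 hm0
      have := hE (fun x => f1 m x * P m x) (fun x => f2 m x * P m x) k12 k21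
        (fun x => (m * (r1 x + r2 x) : ℝ) + k11 x - k22 x) (2 * s * m - 2 * M) hm1 hm2 ?_ ?_ hM12 hM21 ?_ ?_ ?_
      · simpa only [hf1, Pa, mul_one] using this
      · intro x
        refine ((df1 m x).mul (dP m x)).congr_deriv ?_
        ring
      · intro x
        refine ((df2 m x).mul (dP m x)).congr_deriv ?_
        push_cast
        ring
      · intro x
        simp only [Complex.sub_re, Complex.add_re, Complex.ofReal_re]
        have e1 := (Complex.abs_re_le_norm (k11 x)).trans (hM11 x)
        have e2 := (Complex.abs_re_le_norm (k22 x)).trans (hM22 x)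
        have e3 := abs_le.1 e1
        have e4 := abs_le.1 e2
        have e5 : m * (s + s) ≤ m * (r1 x + r2 x) := by gcongr <;> [exact hsr1 x; exact hsr2 x]
        linarith
      · simpa only [hf1, Pa, mul_one] using hc1
      · simpa only [hf2, Pa, mul_one] using hc2
    constructor
    · rw [tendsto_iff_norm_sub_tendsto_zero]
      exact squeeze_zero' (Eventually.of_forall fun _ => norm_nonneg _) (key.mono fun _ h => h.1) hCl
    · exact squeeze_zero_norm' (key.mono fun _ h => h.2) hCl
  obtain ⟨t11, t21⟩ := hcol y11 y21 1 0 (by simp) (by simp) i11 i21 d11 d21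
  obtain ⟨t12, t22⟩ := hcol y12 y22 0 1 (by simp) (by simp) i12 i22 d12 d22
  -- Liouville
  have hdet : ∀ m, (y11 m b * y22 m b - y12 m b * y21 m b) * P m b = Complex.exp (-(m * g2 b : ℝ) + β2 b) := by
    intro m
    have dQ : ∀ x, HasDerivAt (fun x => Complex.exp ((m * g2 x : ℝ) - β2 x))
        (((m * r2 x : ℝ) - k22 x) * Complex.exp ((m * g2 x : ℝ) - β2 x)) x := by
      intro x
      have := ((((dg2 x).const_mul m).ofReal_comp).sub (dβ2 x)).cexp
      refine this.congr_deriv ?_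
      rw [mul_comm]
      rfl
    have key : ∀ x, HasDerivAt (fun x => (y11 m x * y22 m x - y12 m x * y21 m x) * P m x *
        Complex.exp ((m * g2 x : ℝ) - β2 x)) 0 x := by
      intro x
      refine ((((((d11 m x).mul (d22 m x)).sub ((d12 m x).mul (d21 m x))).mul (dP m x))).mul (dQ x)).congr_deriv ?_
      simp only [Pi.mul_apply, Pi.sub_apply]
      push_cast
      ring
    have := is_const_of_deriv_eq_zero (fun z => (key z).differentiableAt) (fun z => (key z).deriv) b a
    simp only [i11, i22, i12, i21, Pa, g2a, β2a] at this
    simp only [mul_zero, Complex.ofReal_zero, sub_zero, Complex.exp_zero, mul_one] at this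
    have e : -(m * g2 b : ℝ) + β2 b = -((m * g2 b : ℝ) - β2 b) := by ring
    rw [e, Complex.exp_neg]
    exact eq_inv_of_mul_eq_one_left this
  have hexp0 : ∀ (g : ℝ) (β : ℂ), 0 < g → Tendsto (fun m : ℝ => Complex.exp (-(m * g : ℝ) + β)) atTop (𝓝 0) := by
    intro g β hg
    rw [tendsto_zero_iff_norm_tendsto_zero]
    simp only [Complex.norm_exp, Complex.add_re, Complex.neg_re, Complex.ofReal_re]
    refine Real.tendsto_exp_atBot.comp (tendsto_atBot_add_const_right _ _ ?_)
    exact tendsto_neg_atTop_atBot.comp (tendsto_id.atTop_mul_const hg)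
  have hP0 : Tendsto (fun m => P m b) atTop (𝓝 0) := by
    refine (hexp0 (g1 b) (-β1 b) g1b).congr fun m => ?_
    simp only [hP, neg_add]
  have hQ0 := hexp0 (g2 b) (β2 b) g2b
  set Δ : ℝ → ℂ := fun m => (u11 + (v11 * y11 m b + v12 * y21 m b)) * (u22 + (v21 * y12 m b + v22 * y22 m b)) -
        (u12 + (v11 * y12 m b + v12 * y22 m b)) * (u21 + (v21 * y11 m b + v22 * y21 m b)) with hΔ
  have hΔP : ∀ m, Δ m * P m b = (u11 * u22 - u12 * u21) * P m b
      + (u22 * (v11 * (y11 m b * P m b) + v12 * (y21 m b * P m b)) + u11 * (v21 * (y12 m b * P m b) + v22 * (y22 m b * P m b))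
        - u12 * (v21 * (y11 m b * P m b) + v22 * (y21 m b * P m b)) - u21 * (v11 * (y12 m b * P m b) + v12 * (y22 m b * P m b)))
      + (v11 * v22 - v12 * v21) * Complex.exp (-(m * g2 b : ℝ) + β2 b) := by
    intro m
    rw [← hdet m, hΔ]
    ring
  have hΔlim : Tendsto (fun m => Δ m * P m b) atTop (𝓝 (v11 * u22 - u12 * v21)) := by
    have := ((hP0.const_mul (u11 * u22 - u12 * u21)).add
      ((((((t11.const_mul v11).add (t21.const_mul v12)).const_mul u22).add
        (((t12.const_mul v21).add (t22.const_mul v22)).const_mul u11)).sub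
        (((t11.const_mul v21).add (t21.const_mul v22)).const_mul u12)).sub
        (((t12.const_mul v11).add (t22.const_mul v12)).const_mul u21))).add
      (hQ0.const_mul (v11 * v22 - v12 * v21))
    have e : (v11 * u22 - u12 * v21) = (u11 * u22 - u12 * u21) * 0 + (u22 * (v11 * 1 + v12 * 0) + u11 * (v21 * 0 + v22 * 0)
       - u12 * (v21 * 1 + v22 * 0) - u21 * (v11 * 0 + v12 * 0)) + (v11 * v22 - v12 * v21) * 0 := by ring
    rw [e]
    exact this.congr fun m => (hΔP m).symm
  refine ⟨g1 b / 2, by positivity, ?_⟩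
  have hw0 : 0 < ‖v11 * u22 - u12 * v21‖ := norm_pos_iff.2 hw
  have hev := hΔlim.norm.eventually_const_lt (half_lt_self hw0)
  have hev2 : ∀ᶠ m : ℝ in atTop, Real.exp (-(β1 b).re) / (‖v11 * u22 - u12 * v21‖ / 2) ≤ Real.exp (g1 b / 2 * m) :=
    (Real.tendsto_exp_atTop.comp (tendsto_id.const_mul_atTop (by positivity))).eventually_ge_atTop _
  filter_upwards [hev, hev2] with m h1 h2
  rw [norm_mul] at h1
  have hPn : ‖P m b‖ = Real.exp (-(g1 b / 2 * m)) * Real.exp (-(g1 b / 2 * m)) * Real.exp (-(β1 b).re) := by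
    simp only [hP, Complex.norm_exp, Complex.neg_re, Complex.add_re, Complex.ofReal_re]
    rw [← Real.exp_add, ← Real.exp_add]
    congr 1; ring
  rw [div_le_iff₀ (by positivity)] at h2
  set E := Real.exp (g1 b / 2 * m) with hEdef
  have hEpos : 0 < E := Real.exp_pos _
  rw [Real.exp_neg, ← hEdef] at hPn
  rw [hPn] at h1
  have hβ : 0 < Real.exp (-(β1 b).re) := Real.exp_pos _
  change E ≤ ‖Δ m‖
  by_contra hcon
  push Not at hcon
  have h3 : ‖Δ m‖ * (E⁻¹ * E⁻¹ * Real.exp (-(β1 b).re)) ≤ E * (E⁻¹ * E⁻¹ * Real.exp (-(β1 b).re)) := by gcongr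
  have h4 : E * (E⁻¹ * E⁻¹ * Real.exp (-(β1 b).re)) = E⁻¹ * Real.exp (-(β1 b).re) := by field_simp
  have h5 : E⁻¹ * Real.exp (-(β1 b).re) ≤ ‖v11 * u22 - u12 * v21‖ / 2 := by
    rw [inv_mul_le_iff₀ hEpos]; exact h2
  linarith

section
attribute [local instance] Matrix.linftyOpNormedRing Matrix.linftyOpNormedAlgebra

lemma bvp_entry_le (X : Matrix (Fin 2) (Fin 2) ℂ) (i j : Fin 2) : ‖X i j‖ ≤ ‖X‖ := by
  have h := Matrix.linfty_opNNNorm_def X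
  have h1 : ‖X i j‖₊ ≤ ‖X‖₊ := by
    rw [h]
    refine le_trans ?_ (Finset.le_sup (f := fun i => ∑ j, ‖X i j‖₊) (Finset.mem_univ i))
    exact Finset.single_le_sum (f := fun j => ‖X i j‖₊) (fun _ _ => zero_le) (Finset.mem_univ j)
  exact_mod_cast h1

lemma bvp_norm_le (X : Matrix (Fin 2) (Fin 2) ℂ) (K : ℝ) (hK : ∀ i j, ‖X i j‖ ≤ K) : ‖X‖ ≤ 2 * K := by
  have hK0 : 0 ≤ K := (norm_nonneg _).trans (hK 0 0)
  lift K to NNReal using hK0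
  have h := Matrix.linfty_opNNNorm_def X
  have h1 : ‖X‖₊ ≤ 2 * K := by
    rw [h]
    refine Finset.sup_le fun i _ => ?_
    rw [Fin.sum_univ_two, two_mul]
    exact add_le_add (by exact_mod_cast hK i 0) (by exact_mod_cast hK i 1)
  exact_mod_cast h1

lemma bvp_fund (a : ℝ) (A B : ℝ → Matrix (Fin 2) (Fin 2) ℂ)
    (hA : Continuous A) (hB : Continuous B) (K : ℝ)
    (hAK : ∀ x i j, ‖A x i j‖ ≤ K) (hBK : ∀ x i j, ‖B x i j‖ ≤ K) :
    ∃ Y : ℂ → ℝ → Matrix (Fin 2) (Fin 2) ℂ, (∀ l, Y l a = 1) ∧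
      (∀ l x i j, HasDerivAt (fun x => Y l x i j) (((l • A x + B x) * Y l x) i j) x) ∧
      (∀ x i j, Differentiable ℂ (fun l => Y l x i j)) ∧
      (∀ l x i j, ‖Y l x i j‖ ≤ Real.exp (2 * K * (1 + ‖l‖) * |x - a|)) := by
  haveI : NormOneClass (Matrix (Fin 2) (Fin 2) ℂ) := Matrix.linfty_opNormOneClass
  obtain ⟨Y, h1, h2, h3, h4⟩ := bvp_linear_ode a A B hA hB (2 * K)
    (fun x => bvp_norm_le _ _ (hAK x)) (fun x => bvp_norm_le _ _ (hBK x))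
  refine ⟨Y, h1, fun l x i j => ?_, fun x i j => ?_, fun l x i j => (bvp_entry_le _ i j).trans (h4 l x)⟩
  · have L := (LinearMap.toContinuousLinearMap (Matrix.entryLinearMap ℝ ℂ i j)).hasFDerivAt (x := Y l x)
    exact L.comp_hasDerivAt x (h2 l x)
  · exact (LinearMap.toContinuousLinearMap (Matrix.entryLinearMap ℂ ℂ i j)).differentiable.comp (h3 x)
end

lemma bvp_eig_iff (a b : ℝ) (hab : a < b) (A B A' B' : ℝ → Matrix (Fin 2) (Fin 2) ℂ)
    (lam mu : ℂ) (hE : ∀ x ∈ Set.Icc a b, lam • A x + B x = mu • A' x + B' x)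
    (hA : Continuous A') (hB : Continuous B') (K : ℝ) (hAK : ∀ x i j, ‖A' x i j‖ ≤ K) (hBK : ∀ x i j, ‖B' x i j‖ ≤ K)
    (Wa Wb : Matrix (Fin 2) (Fin 2) ℂ) (Y : ℝ → Matrix (Fin 2) (Fin 2) ℂ) (hY1 : Y a = 1)
    (hY : ∀ x i j, HasDerivAt (fun x => Y x i j) (((mu • A' x + B' x) * Y x) i j) x) :
    IsBVPEigenvalue a b A B Wa Wb lam ↔ (Wa + Wb * Y b).det = 0 := by
  have hK0 : 0 ≤ K := (norm_nonneg _).trans (hAK 0 0 0)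
  have hsol : ∀ v : Fin 2 → ℂ, ∀ x, HasDerivAt (fun x => Y x *ᵥ v) ((mu • A' x + B' x) *ᵥ (Y x *ᵥ v)) x := by
    intro v x
    rw [hasDerivAt_pi]
    intro i
    have h := ((hY x i 0).mul_const (v 0)).add ((hY x i 1).mul_const (v 1))
    rw [Matrix.mulVec_mulVec]
    simp only [Matrix.mulVec, dotProduct, Fin.sum_univ_two]
    exact h
  rw [← Matrix.exists_mulVec_eq_zero_iff]
  constructor
  · rintro ⟨y, y', h1, -, ⟨x0, hx0, hx0n⟩, h3, h4⟩
    have huniq : Set.EqOn y (fun x => Y x *ᵥ y a) (Set.Icc a b) := by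
      refine ODE_solution_unique_of_mem_Icc_right (v := fun x w => (mu • A' x + B' x) *ᵥ w)
        (s := fun _ => Set.univ) (K := Real.toNNReal (2 * (‖mu‖ * K + K))) ?_
        (fun x hx => (h1 x hx).continuousWithinAt) ?_ (fun _ _ => Set.mem_univ _)
        (fun x _ => (hsol (y a) x).continuousAt.continuousWithinAt)
        (fun x _ => (hsol (y a) x).hasDerivWithinAt) (fun _ _ => Set.mem_univ _) ?_
      · intro t _
        refine LipschitzWith.lipschitzOnWith ?_
        refine LipschitzWith.of_dist_le_mul fun w w' => ?_
        rw [dist_eq_norm, dist_eq_norm, ← Matrix.mulVec_sub, Real.coe_toNNReal _ (by positivity)]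
        rw [pi_norm_le_iff_of_nonneg (by positivity)]
        intro i
        have e : ∀ j, ‖(mu • A' t + B' t) i j * (w - w') j‖ ≤ (‖mu‖ * K + K) * ‖w - w'‖ := by
          intro j
          rw [norm_mul]
          refine mul_le_mul ?_ (norm_le_pi_norm (w - w') j) (norm_nonneg _) (by positivity)
          rw [Matrix.add_apply, Matrix.smul_apply, smul_eq_mul]
          refine (norm_add_le _ _).trans (add_le_add ?_ (hBK t i j))
          rw [norm_mul]
          exact mul_le_mul_of_nonneg_left (hAK t i j) (norm_nonneg _)
        rw [Matrix.mulVec, dotProduct, Fin.sum_univ_two]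
        refine (norm_add_le _ _).trans ?_
        linarith [e 0, e 1]
      · intro t ht
        have ht' : t ∈ Set.Icc a b := ⟨ht.1, ht.2.le⟩
        have := h1 t ht'
        rw [h3 t ht', hE t ht'] at this
        refine this.mono_of_mem_nhdsWithin ?_
        exact mem_of_superset (Icc_mem_nhdsGE ht.2) (Set.Icc_subset_Icc_left ht.1)
      · simp [hY1]
    refine ⟨y a, ?_, ?_⟩
    · intro h0
      apply hx0n
      rw [huniq hx0, h0]; simp
    · rw [Matrix.add_mulVec, ← Matrix.mulVec_mulVec]
      have hb : y b = Y b *ᵥ y a := huniq (Set.right_mem_Icc.2 hab.le)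
      rw [← hb]
      exact h4
  · rintro ⟨v, hv, hv0⟩
    have hYc : Continuous (fun x => Y x *ᵥ v) := continuous_iff_continuousAt.2 fun x => (hsol v x).continuousAt
    refine ⟨fun x => Y x *ᵥ v, fun x => (mu • A' x + B' x) *ᵥ (Y x *ᵥ v), fun x _ => (hsol v x).hasDerivWithinAt,
      ?_, ⟨a, Set.left_mem_Icc.2 hab.le, by simpa [hY1] using hv⟩, fun x hx => by rw [hE x hx], ?_⟩
    · exact (((hA.const_smul mu).add hB).matrix_mulVec hYc).continuousOn
    · rw [← hv0, Matrix.add_mulVec, ← Matrix.mulVec_mulVec]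
      change Wa *ᵥ (Y a *ᵥ v) + _ = _
      rw [hY1, Matrix.one_mulVec]

lemma bvp_det_main (a b : ℝ) (hab : a < b) (r1 r2 : ℝ → ℝ) (hr1 : Continuous r1) (hr2 : Continuous r2)
    (s : ℝ) (hs : 0 < s) (hsr1 : ∀ x, s ≤ r1 x) (hsr2 : ∀ x, s ≤ r2 x)
    (k : ℝ → Matrix (Fin 2) (Fin 2) ℂ) (hk : Continuous k) (K : ℝ) (hK : ∀ x i j, ‖k x i j‖ ≤ K)
    (Wa Wb : Matrix (Fin 2) (Fin 2) ℂ)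
    (hw2 : Wb 0 0 * Wa 1 1 - Wa 0 1 * Wb 1 0 ≠ 0) (hw1 : Wb 0 1 * Wa 1 0 - Wa 0 0 * Wb 1 1 ≠ 0)
    (Y : ℂ → ℝ → Matrix (Fin 2) (Fin 2) ℂ) (hY1 : ∀ l, Y l a = 1)
    (hY : ∀ l x i j, HasDerivAt (fun x => Y l x i j)
      (((l • Matrix.diagonal ![(r1 x : ℂ), -(r2 x : ℂ)] + k x) * Y l x) i j) x)
    (hYd : ∀ x i j, Differentiable ℂ (fun l => Y l x i j))
    (hYb : ∀ l x i j, ‖Y l x i j‖ ≤ Real.exp (2 * K * (1 + ‖l‖) * |x - a|)) :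
    {z : ℂ | (Wa + Wb * Y z b).det = 0}.Infinite ∧ {z : ℂ | (Wa + Wb * Y z b).det = 0}.Countable := by
  have hkc : ∀ i j, Continuous fun x => k x i j := fun i j => hk.matrix_elem i j
  have hform : ∀ z, (Wa + Wb * Y z b).det =
      (Wa 0 0 + (Wb 0 0 * Y z b 0 0 + Wb 0 1 * Y z b 1 0)) * (Wa 1 1 + (Wb 1 0 * Y z b 0 1 + Wb 1 1 * Y z b 1 1))
      - (Wa 0 1 + (Wb 0 0 * Y z b 0 1 + Wb 0 1 * Y z b 1 1)) * (Wa 1 0 + (Wb 1 0 * Y z b 0 0 + Wb 1 1 * Y z b 1 0)) := by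
    intro z
    simp [Matrix.det_fin_two, Matrix.mul_apply, Fin.sum_univ_two]
  have hd : ∀ l x, 
      HasDerivAt (fun x => Y l x 0 0) ((l * r1 x + k x 0 0) * Y l x 0 0 + k x 0 1 * Y l x 1 0) x ∧
      HasDerivAt (fun x => Y l x 0 1) ((l * r1 x + k x 0 0) * Y l x 0 1 + k x 0 1 * Y l x 1 1) x ∧
      HasDerivAt (fun x => Y l x 1 0) (k x 1 0 * Y l x 0 0 + (-(l * r2 x) + k x 1 1) * Y l x 1 0) x ∧
      HasDerivAt (fun x => Y l x 1 1) (k x 1 0 * Y l x 0 1 + (-(l * r2 x) + k x 1 1) * Y l x 1 1) x := by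
    intro l x
    refine ⟨?_, ?_, ?_, ?_⟩
    · convert hY l x 0 0 using 1; simp [Matrix.mul_apply, Fin.sum_univ_two]
    · convert hY l x 0 1 using 1; simp [Matrix.mul_apply, Fin.sum_univ_two]
    · convert hY l x 1 0 using 1; simp [Matrix.mul_apply, Fin.sum_univ_two]
    · convert hY l x 1 1 using 1; simp [Matrix.mul_apply, Fin.sum_univ_two]
  obtain ⟨R1, hR1, hE1⟩ := bvp_lower a b hab r1 r2 hr1 hr2 s hs hsr1 hsr2
    (fun x => k x 0 0) (fun x => k x 0 1) (fun x => k x 1 0) (fun x => k x 1 1) (hkc 0 0) (hkc 1 1) K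
    (fun x => hK x 0 0) (fun x => hK x 0 1) (fun x => hK x 1 0) (fun x => hK x 1 1)
    (fun m x => Y m x 0 0) (fun m x => Y m x 0 1) (fun m x => Y m x 1 0) (fun m x => Y m x 1 1)
    (fun m => by simp [hY1]) (fun m => by simp [hY1]) (fun m => by simp [hY1]) (fun m => by simp [hY1])
    (fun m x => by convert (hd m x).1 using 1; push_cast; ring)
    (fun m x => by convert (hd m x).2.2.1 using 1; push_cast; ring)
    (fun m x => by convert (hd m x).2.1 using 1; push_cast; ring)
    (fun m x => by convert (hd m x).2.2.2 using 1; push_cast; ring)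
    (Wa 0 0) (Wa 0 1) (Wa 1 0) (Wa 1 1) (Wb 0 0) (Wb 0 1) (Wb 1 0) (Wb 1 1) hw2
  obtain ⟨R2, hR2, hE2⟩ := bvp_lower a b hab r2 r1 hr2 hr1 s hs hsr2 hsr1
    (fun x => k x 1 1) (fun x => k x 1 0) (fun x => k x 0 1) (fun x => k x 0 0) (hkc 1 1) (hkc 0 0) K
    (fun x => hK x 1 1) (fun x => hK x 1 0) (fun x => hK x 0 1) (fun x => hK x 0 0)
    (fun m x => Y (-m) x 1 1) (fun m x => Y (-m) x 1 0) (fun m x => Y (-m) x 0 1) (fun m x => Y (-m) x 0 0)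
    (fun m => by simp [hY1]) (fun m => by simp [hY1]) (fun m => by simp [hY1]) (fun m => by simp [hY1])
    (fun m x => by convert (hd (-m) x).2.2.2 using 1; push_cast; ring)
    (fun m x => by convert (hd (-m) x).2.1 using 1; push_cast; ring)
    (fun m x => by convert (hd (-m) x).2.2.1 using 1; push_cast; ring)
    (fun m x => by convert (hd (-m) x).1 using 1; push_cast; ring)
    (Wa 0 1) (Wa 0 0) (Wa 1 1) (Wa 1 0) (Wb 0 1) (Wb 0 0) (Wb 1 1) (Wb 1 0) hw1
  have hK0 : 0 ≤ K := (norm_nonneg _).trans (hK 0 0 0)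
  obtain ⟨W, hWa, hWb⟩ : ∃ W : ℝ, (∀ i j, ‖Wa i j‖ ≤ W) ∧ (∀ i j, ‖Wb i j‖ ≤ W) := by
    refine ⟨∑ i, ∑ j, (‖Wa i j‖ + ‖Wb i j‖), fun i j => ?_, fun i j => ?_⟩
    all_goals
      have q := fun i j => norm_nonneg (Wa i j)
      have q' := fun i j => norm_nonneg (Wb i j)
      simp only [Fin.sum_univ_two]
      fin_cases i <;> fin_cases j <;> simp <;>
        linarith [q 0 0, q 0 1, q 1 0, q 1 1, q' 0 0, q' 0 1, q' 1 0, q' 1 1]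
  have hW0 : 0 ≤ W := (norm_nonneg _).trans (hWa 0 0)
  refine bvp_zeros_infinite_countable (fun z => (Wa + Wb * Y z b).det) ?_ (18 * W ^ 2 + 4 * K * (b - a)) ?_
    (min R1 R2) (lt_min hR1 hR2) ?_ ?_
  · rw [funext hform]
    have := hYd b
    have h00 := this 0 0
    have h01 := this 0 1
    have h10 := this 1 0
    have h11 := this 1 1
    fun_prop
  · intro z
    simp only [hform]
    set T := Real.exp (2 * K * (1 + ‖z‖) * |b - a|) with hT
    have hT1 : 1 ≤ T := Real.one_le_exp (by positivity)
    have e : ∀ i j, ‖Wa i j + (Wb i 0 * Y z b 0 j + Wb i 1 * Y z b 1 j)‖ ≤ 3 * W * T := by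
      intro i j
      have e1 : ‖Wa i j‖ ≤ W * T := (hWa i j).trans (le_mul_of_one_le_right hW0 hT1)
      have e2 : ∀ l, ‖Wb i l * Y z b l j‖ ≤ W * T := by
        intro l
        rw [norm_mul]
        exact mul_le_mul (hWb i l) (hYb z b l j) (norm_nonneg _) hW0
      have := norm_add_le (Wa i j) (Wb i 0 * Y z b 0 j + Wb i 1 * Y z b 1 j)
      have := norm_add_le (Wb i 0 * Y z b 0 j) (Wb i 1 * Y z b 1 j)
      linarith [e2 0, e2 1]
    have hp : 0 ≤ 3 * W * T := by positivity
    calc _ ≤ 3 * W * T * (3 * W * T) + 3 * W * T * (3 * W * T) := by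
          refine (norm_sub_le _ _).trans ?_
          rw [norm_mul, norm_mul]
          exact add_le_add (mul_le_mul (e 0 0) (e 1 1) (norm_nonneg _) hp)
            (mul_le_mul (e 0 1) (e 1 0) (norm_nonneg _) hp)
      _ = (18 * W ^ 2) * (T * T) := by ring
      _ ≤ Real.exp (18 * W ^ 2) * (T * T) := by
          refine mul_le_mul_of_nonneg_right ?_ (by positivity)
          linarith [Real.add_one_le_exp (18 * W ^ 2)]
      _ = Real.exp (18 * W ^ 2 + (2 * K * (1 + ‖z‖) * (b - a) + 2 * K * (1 + ‖z‖) * (b - a))) := by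
          rw [Real.exp_add, Real.exp_add, hT, abs_of_pos (sub_pos.2 hab)]
      _ ≤ _ := by
          refine Real.exp_le_exp.2 ?_
          have : 0 ≤ W ^ 2 * ‖z‖ := by positivity
          linarith
  · filter_upwards [hE1, eventually_ge_atTop 0] with x hx hx0
    refine (Real.exp_le_exp.2 (mul_le_mul_of_nonneg_right (min_le_left _ _) hx0)).trans ?_
    simp only [hform]
    exact hx
  · filter_upwards [hE2, eventually_ge_atTop 0] with x hx hx0
    refine (Real.exp_le_exp.2 (mul_le_mul_of_nonneg_right (min_le_right _ _) hx0)).trans ?_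
    simp only [hform]
    refine hx.trans (le_of_eq ?_)
    rw [← norm_neg]
    congr 1
    push_cast
    ring

end

/-- The set of eigenvalues of the first-order boundary-value problem is countably
infinite. -/
theorem bvp_eigenvalues_countably_infinite
    (a b φ : ℝ) (hab : a < b)
    (ρ₁ ρ₂ : ℝ → ℝ)
    (hρ₁pos : ∀ x ∈ Set.Icc a b, 0 < ρ₁ x) (hρ₂pos : ∀ x ∈ Set.Icc a b, 0 < ρ₂ x)
    (hρ₁ : ContDiffOn ℝ 1 ρ₁ (Set.Icc a b)) (hρ₂ : ContDiffOn ℝ 1 ρ₂ (Set.Icc a b))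
    (A : ℝ → Matrix (Fin 2) (Fin 2) ℂ)
    (hA : ∀ x, A x = Matrix.diagonal
      ![Complex.exp (Complex.I * φ) * (ρ₁ x : ℂ),
        -(Complex.exp (Complex.I * φ) * (ρ₂ x : ℂ))])
    (B : ℝ → Matrix (Fin 2) (Fin 2) ℂ)
    (hB : ∀ i j, ContDiffOn ℝ 1 (fun x => B x i j) (Set.Icc a b))
    (Wa Wb : Matrix (Fin 2) (Fin 2) ℂ)
    (E₁₁ E₂₂ Ω₁ Ω₂ : Matrix (Fin 2) (Fin 2) ℂ)
    (hE₁₁ : E₁₁ = Matrix.diagonal ![1, 0]) (hE₂₂ : E₂₂ = Matrix.diagonal ![0, 1])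
    (hΩ₁ : Ω₁ = Wa * E₁₁ + Wb * E₂₂) (hΩ₂ : Ω₂ = Wa * E₂₂ + Wb * E₁₁)
    (hΩ₁inv : IsUnit Ω₁) (hΩ₂inv : IsUnit Ω₂) :
    {lam : ℂ | IsBVPEigenvalue a b A B Wa Wb lam}.Infinite ∧
    {lam : ℂ | IsBVPEigenvalue a b A B Wa Wb lam}.Countable := by
  have hc1 := hρ₁.continuousOn
  have hc2 := hρ₂.continuousOn
  have hBc : ContinuousOn B (Set.Icc a b) :=
    continuousOn_pi.2 fun i => continuousOn_pi.2 fun j => (hB i j).continuousOn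
  have hne : (Set.Icc a b).Nonempty := Set.nonempty_Icc.2 hab.le
  let π : ℝ → ℝ := fun x => (Set.projIcc a b hab.le x : ℝ)
  have hπc : Continuous π := continuous_subtype_val.comp continuous_projIcc
  have hπm : ∀ x, π x ∈ Set.Icc a b := fun x => (Set.projIcc a b hab.le x).2
  have hπe : ∀ x ∈ Set.Icc a b, π x = x := fun x hx => by
    simp only [π]; rw [Set.projIcc_of_mem hab.le hx]
  have hr1c : Continuous (fun x => ρ₁ (π x)) := hc1.comp_continuous hπc hπm
  have hr2c : Continuous (fun x => ρ₂ (π x)) := hc2.comp_continuous hπc hπm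
  have hkc : Continuous (fun x => B (π x)) := hBc.comp_continuous hπc hπm
  obtain ⟨x1, hx1, hm1⟩ := isCompact_Icc.exists_isMinOn hne hc1
  obtain ⟨x2, hx2, hm2⟩ := isCompact_Icc.exists_isMinOn hne hc2
  obtain ⟨M1, hM1⟩ := isCompact_Icc.exists_bound_of_continuousOn hc1
  obtain ⟨M2, hM2⟩ := isCompact_Icc.exists_bound_of_continuousOn hc2
  choose MB hMB using fun i j => isCompact_Icc.exists_bound_of_continuousOn (hB i j).continuousOn
  have p1 : 0 ≤ M1 := (norm_nonneg _).trans (hM1 a (Set.left_mem_Icc.2 hab.le))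
  have p2 : 0 ≤ M2 := (norm_nonneg _).trans (hM2 a (Set.left_mem_Icc.2 hab.le))
  have pB : ∀ i j, 0 ≤ MB i j := fun i j => (norm_nonneg _).trans (hMB i j a (Set.left_mem_Icc.2 hab.le))
  set K := M1 + M2 + (MB 0 0 + MB 0 1 + MB 1 0 + MB 1 1) with hKdef
  have hBK : ∀ x i j, ‖B (π x) i j‖ ≤ K := by
    intro x i j
    refine (hMB i j _ (hπm x)).trans ?_
    fin_cases i <;> fin_cases j <;> simp [hKdef] <;> linarith [pB 0 0, pB 0 1, pB 1 0, pB 1 1]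
  let D : ℝ → Matrix (Fin 2) (Fin 2) ℂ := fun x => Matrix.diagonal ![(ρ₁ (π x) : ℂ), -(ρ₂ (π x) : ℂ)]
  have hDc : Continuous D := by
    refine Continuous.matrix_diagonal (continuous_pi fun i => ?_)
    have q1 := Complex.continuous_ofReal.comp hr1c
    have q2 := (Complex.continuous_ofReal.comp hr2c).neg
    fin_cases i
    · exact q1
    · exact q2
  have hDK : ∀ x i j, ‖D x i j‖ ≤ K := by
    intro x i j
    have q1 := hM1 _ (hπm x)
    have q2 := hM2 _ (hπm x)
    rw [Real.norm_eq_abs] at q1 q2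
    fin_cases i <;> fin_cases j <;> simp [hKdef, D] <;> linarith [pB 0 0, pB 0 1, pB 1 0, pB 1 1]
  obtain ⟨Y, hY1, hY2, hY3, hY4⟩ := bvp_fund a D (fun x => B (π x)) hDc hkc K hDK hBK
  have hdet1 : Ω₁.det ≠ 0 := ((Matrix.isUnit_iff_isUnit_det _).1 hΩ₁inv).ne_zero
  have hdet2 : Ω₂.det ≠ 0 := ((Matrix.isUnit_iff_isUnit_det _).1 hΩ₂inv).ne_zero
  have hmain := bvp_det_main a b hab (fun x => ρ₁ (π x)) (fun x => ρ₂ (π x)) hr1c hr2c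
    (min (ρ₁ x1) (ρ₂ x2)) (lt_min (hρ₁pos _ hx1) (hρ₂pos _ hx2))
    (fun x => (min_le_left _ _).trans (hm1 (hπm x))) (fun x => (min_le_right _ _).trans (hm2 (hπm x)))
    (fun x => B (π x)) hkc K hBK Wa Wb
    (by
      intro h0
      apply hdet2
      rw [hΩ₂, hE₁₁, hE₂₂, Matrix.det_fin_two]
      simp [Matrix.mul_apply, Fin.sum_univ_two]
      linear_combination h0)
    (by
      intro h0
      apply hdet1
      rw [hΩ₁, hE₁₁, hE₂₂, Matrix.det_fin_two]
      simp [Matrix.mul_apply, Fin.sum_univ_two]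
      linear_combination -h0)
    Y hY1 hY2 hY3 hY4
  have hc0 : Complex.exp (Complex.I * φ) ≠ 0 := Complex.exp_ne_zero _
  have hset : {lam : ℂ | IsBVPEigenvalue a b A B Wa Wb lam} =
      (Equiv.mulRight₀ _ hc0) ⁻¹' {z : ℂ | (Wa + Wb * Y z b).det = 0} := by
    ext lam
    refine bvp_eig_iff a b hab A B D (fun x => B (π x)) lam (lam * Complex.exp (Complex.I * φ)) ?_ hDc hkc K hDK hBK
      Wa Wb (Y _) (hY1 _) (hY2 _)
    intro x hx
    simp only [D, hA, hπe x hx]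
    congr 1
    ext i j
    fin_cases i <;> fin_cases j <;> simp [mul_assoc]
  rw [hset]
  refine ⟨hmain.1.preimage ?_, hmain.2.preimage (Equiv.injective _)⟩
  rw [(Equiv.surjective _).range_eq]
  exact Set.subset_univ _
end

section
/- The set of eigenvalues of the Dirac-type boundary-value problem is countably infinite, i.e., the set {λ ∈ ℝ : there is a nonzero continuously differentiable pair (f,g) on [a,b] satisfying the Dirac-type system with parameter λ and the separated boundary conditions} is infinite and countable. -/
/-- The pair `(f,g)`, continuously differentiable on `[a,b]`, satisfies the
Dirac-type system with parameter `lam`: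
`-g' + t g + (p - lam ρ) f = 0` and `f' + t f + (q - lam ρ) g = 0` on `[a,b]`. -/
def SatisfiesDiracSystem (a b : ℝ) (p q t ρ : ℝ → ℝ) (lam : ℝ) (f g : ℝ → ℝ) : Prop :=
  ∃ f' g' : ℝ → ℝ,
    (∀ x ∈ Set.Icc a b, HasDerivWithinAt f (f' x) (Set.Icc a b) x) ∧
    (∀ x ∈ Set.Icc a b, HasDerivWithinAt g (g' x) (Set.Icc a b) x) ∧
    ContinuousOn f' (Set.Icc a b) ∧ ContinuousOn g' (Set.Icc a b) ∧
    (∀ x ∈ Set.Icc a b, -g' x + t x * g x + (p x - lam * ρ x) * f x = 0) ∧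
    (∀ x ∈ Set.Icc a b, f' x + t x * f x + (q x - lam * ρ x) * g x = 0)

/-- The separated boundary conditions
`f(a) cos α + g(a) sin α = 0` and `f(b) cos β + g(b) sin β = 0`. -/
def DiracBC (a b α β : ℝ) (f g : ℝ → ℝ) : Prop :=
  f a * Real.cos α + g a * Real.sin α = 0 ∧
  f b * Real.cos β + g b * Real.sin β = 0

/-- `lam` is an eigenvalue of the Dirac-type boundary-value problem. -/
def IsDiracEigenvalue (a b : ℝ) (p q t ρ : ℝ → ℝ) (α β lam : ℝ) : Prop :=
  ∃ f g : ℝ → ℝ,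
    SatisfiesDiracSystem a b p q t ρ lam f g ∧
    (∃ x ∈ Set.Icc a b, (f x ≠ 0 ∨ g x ≠ 0)) ∧
    DiracBC a b α β f g

open Set

namespace DiracAux

lemma right_deriv {a b : ℝ} {f : ℝ → ℝ} {f' : ℝ → ℝ}
    (h : ∀ x ∈ Icc a b, HasDerivWithinAt f (f' x) (Icc a b) x) :
    ∀ x ∈ Ico a b, HasDerivWithinAt f (f' x) (Ici x) x := by
  intro x hx
  exact (h x ⟨hx.1, hx.2.le⟩).mono_of_mem_nhdsWithin (Icc_mem_nhdsGE_of_mem hx)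

lemma cont_of {a b : ℝ} {f : ℝ → ℝ} {f' : ℝ → ℝ}
    (h : ∀ x ∈ Icc a b, HasDerivWithinAt f (f' x) (Icc a b) x) : ContinuousOn f (Icc a b) :=
  fun x hx => (h x hx).continuousWithinAt

/-- Global existence for bounded Lipschitz scalar fields. -/
lemma exists_sol {a b : ℝ} (hab : a < b) (v : ℝ → ℝ → ℝ) (K L : ℝ) (hK : 0 ≤ K) (hL : 0 ≤ L)
    (hlip : ∀ x ∈ Icc a b, ∀ u w, |v x u - v x w| ≤ K * |u - w|)
    (hc : ∀ u, ContinuousOn (fun x => v x u) (Icc a b))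
    (hb : ∀ x ∈ Icc a b, ∀ u, |v x u| ≤ L) (y : ℝ) :
    ∃ θ : ℝ → ℝ, θ a = y ∧ ∀ x ∈ Icc a b, HasDerivWithinAt θ (v x (θ x)) (Icc a b) x := by
  lift K to NNReal using hK
  lift L to NNReal using hL
  have hP : IsPicardLindelof v (⟨a, left_mem_Icc.2 hab.le⟩ : Icc a b) y
      (L * (b - a).toNNReal) 0 L K := by
    refine ⟨?_, ?_, ?_, ?_⟩
    · intro x hx
      apply LipschitzOnWith.of_dist_le_mul
      intro u _ w _
      exact hlip x hx u w
    · intro u _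
      exact hc u
    · intro x hx u _
      exact hb x hx u
    · simp [hab.le]
  exact hP.exists_eq_forall_mem_Icc_hasDerivWithinAt₀

lemma compare {a b : ℝ} (hab : a < b) {f g f' g' : ℝ → ℝ}
    (hf : ∀ x ∈ Icc a b, HasDerivWithinAt f (f' x) (Icc a b) x)
    (hg : ∀ x ∈ Icc a b, HasDerivWithinAt g (g' x) (Icc a b) x)
    (ha : f a ≤ g a) (h : ∀ x ∈ Icc a b, f' x ≤ g' x) : f b ≤ g b :=
  image_le_of_deriv_right_le_deriv_boundary (cont_of hf) (right_deriv hf) ha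
    (cont_of hg) (right_deriv hg) (fun x hx => h x ⟨hx.1, hx.2.le⟩) (right_mem_Icc.2 hab.le)

/-- Right-hand side of the phase equation, without the spectral term. -/
noncomputable def F (p q t : ℝ → ℝ) (x u : ℝ) : ℝ :=
  t x * Real.sin (2 * u) + (p x + q x) / 2 + (p x - q x) / 2 * Real.cos (2 * u)

lemma F_lip {p q t : ℝ → ℝ} {x M : ℝ} (hp : |p x| ≤ M) (hq : |q x| ≤ M) (ht : |t x| ≤ M)
    (u w : ℝ) : |F p q t x u - F p q t x w| ≤ 4 * M * |u - w| := by
  have h1 := Real.abs_sin_sub_sin_le (2 * u) (2 * w)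
  have h2 := Real.abs_cos_sub_cos_le (2 * u) (2 * w)
  have h3 : |2 * u - 2 * w| = 2 * |u - w| := by
    rw [← mul_sub, abs_mul]; norm_num
  rw [h3] at h1 h2
  have h4 : |(p x - q x) / 2| ≤ M := by
    rw [abs_le] at *; constructor <;> linarith
  have e : F p q t x u - F p q t x w = t x * (Real.sin (2 * u) - Real.sin (2 * w))
      + (p x - q x) / 2 * (Real.cos (2 * u) - Real.cos (2 * w)) := by
    unfold F; ring
  rw [e]
  have hM : 0 ≤ M := (abs_nonneg _).trans hp
  calc _ ≤ |t x| * |Real.sin (2 * u) - Real.sin (2 * w)|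
      + |(p x - q x) / 2| * |Real.cos (2 * u) - Real.cos (2 * w)| := by
        rw [← abs_mul, ← abs_mul]; exact abs_add_le _ _
    _ ≤ M * (2 * |u - w|) + M * (2 * |u - w|) := by gcongr
    _ = _ := by ring

lemma F_bd {p q t : ℝ → ℝ} {x M : ℝ} (hp : |p x| ≤ M) (hq : |q x| ≤ M) (ht : |t x| ≤ M)
    (u : ℝ) : |F p q t x u| ≤ 3 * M := by
  have h4 : |(p x - q x) / 2| ≤ M := by
    rw [abs_le] at *; constructor <;> linarith
  have h5 : |(p x + q x) / 2| ≤ M := by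
    rw [abs_le] at *; constructor <;> linarith
  have hM : 0 ≤ M := (abs_nonneg _).trans hp
  have h1 : |t x * Real.sin (2 * u)| ≤ M * 1 := by
    rw [abs_mul]; exact mul_le_mul ht (Real.abs_sin_le_one _) (abs_nonneg _) hM
  have h2 : |(p x - q x) / 2 * Real.cos (2 * u)| ≤ M * 1 := by
    rw [abs_mul]; exact mul_le_mul h4 (Real.abs_cos_le_one _) (abs_nonneg _) hM
  unfold F
  rw [abs_le] at *; constructor <;> linarith

/-- Solutions with explicit derivatives. -/
def Sol (a b : ℝ) (p q t ρ : ℝ → ℝ) (lam : ℝ) (f g : ℝ → ℝ) : Prop :=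
  (∀ x ∈ Icc a b, HasDerivWithinAt f (-t x * f x - (q x - lam * ρ x) * g x) (Icc a b) x) ∧
  (∀ x ∈ Icc a b, HasDerivWithinAt g (t x * g x + (p x - lam * ρ x) * f x) (Icc a b) x)

lemma Sol.of {a b : ℝ} {p q t ρ : ℝ → ℝ} {lam : ℝ} {f g : ℝ → ℝ}
    (h : SatisfiesDiracSystem a b p q t ρ lam f g) : Sol a b p q t ρ lam f g := by
  obtain ⟨f', g', hf, hg, -, -, h1, h2⟩ := h
  refine ⟨fun x hx => (hf x hx).congr_deriv ?_, fun x hx => (hg x hx).congr_deriv ?_⟩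
  · linarith [h2 x hx]
  · linarith [h1 x hx]

lemma Sol.to {a b : ℝ} {p q t ρ : ℝ → ℝ} {lam : ℝ} {f g : ℝ → ℝ}
    (hp : ContinuousOn p (Icc a b)) (hq : ContinuousOn q (Icc a b))
    (ht : ContinuousOn t (Icc a b)) (hρ : ContinuousOn ρ (Icc a b))
    (h : Sol a b p q t ρ lam f g) : SatisfiesDiracSystem a b p q t ρ lam f g := by
  have cf := cont_of h.1
  have cg := cont_of h.2
  refine ⟨_, _, h.1, h.2, by fun_prop, by fun_prop, fun x _ => by ring, fun x _ => by ring⟩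

lemma Sol.wronskian {a b : ℝ} {p q t ρ : ℝ → ℝ} {lam : ℝ} {f g f₂ g₂ : ℝ → ℝ}
    (h : Sol a b p q t ρ lam f g) (h' : Sol a b p q t ρ lam f₂ g₂) :
    ∀ x ∈ Icc a b, f x * g₂ x - g x * f₂ x = f a * g₂ a - g a * f₂ a := by
  have hd : ∀ x ∈ Icc a b, HasDerivWithinAt (fun x => f x * g₂ x - g x * f₂ x) 0 (Icc a b) x := by
    intro x hx
    refine (((h.1 x hx).fun_mul (h'.2 x hx)).fun_sub ((h.2 x hx).fun_mul (h'.1 x hx))).congr_deriv ?_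
    ring
  exact constant_of_has_deriv_right_zero (cont_of (f' := fun _ => 0) hd)
    (right_deriv (f' := fun _ => 0) hd)

/-- Amplitude: a phase function gives a solution. -/
lemma sol_of_phase {a b : ℝ} (hab : a < b) {p q t ρ : ℝ → ℝ} {lam : ℝ} {θ : ℝ → ℝ}
    (hp : ContinuousOn p (Icc a b)) (hq : ContinuousOn q (Icc a b))
    (ht : ContinuousOn t (Icc a b))
    (hθ : ∀ x ∈ Icc a b, HasDerivWithinAt θ (F p q t x (θ x) - lam * ρ x) (Icc a b) x) :
    ∃ R : ℝ → ℝ, R a = 0 ∧ Sol a b p q t ρ lam (fun x => Real.exp (R x) * Real.cos (θ x))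
      (fun x => Real.exp (R x) * Real.sin (θ x)) := by
  have cθ := cont_of hθ
  set G : ℝ → ℝ := fun x => t x * (Real.sin (θ x) ^ 2 - Real.cos (θ x) ^ 2)
    + (p x - q x) * (Real.sin (θ x) * Real.cos (θ x)) with hG
  have cG : ContinuousOn G (Icc a b) := by fun_prop
  obtain ⟨L, hL⟩ := isCompact_Icc.exists_bound_of_continuousOn cG
  obtain ⟨R, hRa, hR⟩ := exists_sol hab (fun x _ => G x) 0 L le_rfl
    ((norm_nonneg _).trans (hL a (left_mem_Icc.2 hab.le))) (by simp) (fun _ => cG)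
    (fun x hx _ => hL x hx) 0
  refine ⟨R, hRa, fun x hx => ?_, fun x hx => ?_⟩
  · refine ((hR x hx).exp.fun_mul (hθ x hx).cos).congr_deriv ?_
    simp only [hG, F, Real.sin_two_mul, Real.cos_two_mul]
    have := Real.sin_sq_add_cos_sq (θ x)
    linear_combination (Real.exp (R x) * Real.cos (θ x) * t x) * (1 - 2 : ℝ) * this
  · refine ((hR x hx).exp.fun_mul (hθ x hx).sin).congr_deriv ?_
    simp only [hG, F, Real.sin_two_mul, Real.cos_two_mul]
    have := Real.sin_sq_add_cos_sq (θ x)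
    linear_combination (Real.exp (R x) * Real.sin (θ x) * t x + Real.exp (R x) * Real.cos (θ x) * (p x - q x)) * this

/-- The eigenvalue condition in terms of the phase. -/
lemma eigen_iff {a b : ℝ} (hab : a < b) {p q t ρ : ℝ → ℝ} {lam α β : ℝ} {θ η : ℝ → ℝ}
    (hp : ContinuousOn p (Icc a b)) (hq : ContinuousOn q (Icc a b))
    (ht : ContinuousOn t (Icc a b)) (hρ : ContinuousOn ρ (Icc a b))
    (hθ : ∀ x ∈ Icc a b, HasDerivWithinAt θ (F p q t x (θ x) - lam * ρ x) (Icc a b) x)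
    (hη : ∀ x ∈ Icc a b, HasDerivWithinAt η (F p q t x (η x) - lam * ρ x) (Icc a b) x)
    (hθa : θ a = α + Real.pi / 2) (hηa : η a = α) :
    IsDiracEigenvalue a b p q t ρ α β lam ↔ Real.cos (θ b - β) = 0 := by
  have ma : a ∈ Icc a b := left_mem_Icc.2 hab.le
  have mb : b ∈ Icc a b := right_mem_Icc.2 hab.le
  obtain ⟨R, hRa, hR⟩ := sol_of_phase hab hp hq ht hθ
  obtain ⟨S, hSa, hS⟩ := sol_of_phase hab hp hq ht hη
  constructor
  · rintro ⟨f, g, hfg, ⟨x, hx, hne⟩, bca, bcb⟩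
    have h := Sol.of hfg
    have w := h.wronskian hR
    have w₂ := h.wronskian hS
    have w₃ := hR.wronskian hS
    simp only [hRa, hSa, hθa, hηa, Real.exp_zero, one_mul, Real.cos_add_pi_div_two,
      Real.sin_add_pi_div_two] at w w₂ w₃
    have hsc := Real.sin_sq_add_cos_sq α
    have w0 : ∀ x ∈ Icc a b, f x * (Real.exp (R x) * Real.sin (θ x))
        - g x * (Real.exp (R x) * Real.cos (θ x)) = 0 := by
      intro x hx
      rw [w x hx]; linarith
    -- the pair does not vanish at `b`
    have hnb : f b ≠ 0 ∨ g b ≠ 0 := by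
      by_contra hcon
      push Not at hcon
      have w20 : ∀ x ∈ Icc a b, f x * (Real.exp (S x) * Real.sin (η x))
          - g x * (Real.exp (S x) * Real.cos (η x)) = 0 := by
        intro x hx
        rw [w₂ x hx, ← w₂ b mb, hcon.1, hcon.2]; ring
      have e1 := w0 x hx
      have e2 := w20 x hx
      have e3 := w₃ x hx
      have hf0 : f x = 0 := by
        linear_combination (Real.exp (R x) * Real.cos (θ x)) * (-1) * e2
          + Real.exp (S x) * Real.cos (η x) * e1 + f x * e3 - f x * hsc
      have hg0 : g x = 0 := by
        linear_combination (Real.exp (R x) * Real.sin (θ x)) * (-1) * e2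
          + Real.exp (S x) * Real.sin (η x) * e1 + g x * e3 - g x * hsc
      tauto
    have eb : f b * Real.sin (θ b) - g b * Real.cos (θ b) = 0 := by
      have := w0 b mb
      have h2 : Real.exp (R b) * (f b * Real.sin (θ b) - g b * Real.cos (θ b)) = 0 := by
        linarith
      exact (mul_eq_zero.1 h2).resolve_left (Real.exp_ne_zero _)
    rw [Real.cos_sub]
    have hf : f b * (Real.cos (θ b) * Real.cos β + Real.sin (θ b) * Real.sin β) = 0 := by
      linear_combination Real.cos (θ b) * bcb + Real.sin β * eb
    have hg : g b * (Real.cos (θ b) * Real.cos β + Real.sin (θ b) * Real.sin β) = 0 := by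
      linear_combination Real.sin (θ b) * bcb - Real.cos β * eb
    rcases hnb with h | h
    · exact (mul_eq_zero.1 hf).resolve_left h
    · exact (mul_eq_zero.1 hg).resolve_left h
  · intro hc
    refine ⟨_, _, hR.to hp hq ht hρ, ⟨a, ma, ?_⟩, ?_, ?_⟩
    · by_contra hcon
      push Not at hcon
      simp only [hRa, Real.exp_zero, one_mul] at hcon
      have := Real.sin_sq_add_cos_sq (θ a)
      rw [hcon.1, hcon.2] at this
      norm_num at this
    · simp only [hRa, hθa, Real.exp_zero, one_mul, Real.cos_add_pi_div_two,
        Real.sin_add_pi_div_two]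
      ring
    · rw [Real.cos_sub] at hc
      linear_combination Real.exp (R b) * hc

/-- The phase at `b` is strictly decreasing in the spectral parameter. -/
lemma phase_lt {a b : ℝ} (hab : a < b) {p q t ρ : ℝ → ℝ} {M m : ℝ} (hm : 0 < m)
    (hp : ∀ x ∈ Icc a b, |p x| ≤ M) (hq : ∀ x ∈ Icc a b, |q x| ≤ M)
    (ht : ∀ x ∈ Icc a b, |t x| ≤ M) (hρ : ∀ x ∈ Icc a b, m ≤ ρ x)
    {lam mu : ℝ} (hlm : lam < mu) {θ η : ℝ → ℝ}
    (hθ : ∀ x ∈ Icc a b, HasDerivWithinAt θ (F p q t x (θ x) - lam * ρ x) (Icc a b) x)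
    (hη : ∀ x ∈ Icc a b, HasDerivWithinAt η (F p q t x (η x) - mu * ρ x) (Icc a b) x)
    (h0 : θ a = η a) : η b < θ b := by
  have ma : a ∈ Icc a b := left_mem_Icc.2 hab.le
  have mb : b ∈ Icc a b := right_mem_Icc.2 hab.le
  have hM : 0 ≤ M := (abs_nonneg _).trans (hp a ma)
  have hba : 0 < b - a := sub_pos.2 hab
  have hc : 0 < (mu - lam) * m := mul_pos (sub_pos.2 hlm) hm
  have hD : 0 < 1 + 4 * M * (b - a) := by positivity
  obtain ⟨δ, hδ, hδc⟩ : ∃ δ, 0 < δ ∧ δ * (1 + 4 * M * (b - a)) < (mu - lam) * m := by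
    refine ⟨(mu - lam) * m / 2 / (1 + 4 * M * (b - a)), by positivity, ?_⟩
    rw [div_mul_cancel₀ _ hD.ne']
    linarith
  have hd : ∀ x ∈ Icc a b, HasDerivWithinAt (fun x => θ x - η x)
      ((F p q t x (θ x) - lam * ρ x) - (F p q t x (η x) - mu * ρ x)) (Icc a b) x :=
    fun x hx => (hθ x hx).fun_sub (hη x hx)
  have hl : ∀ x ∈ Icc a b, HasDerivWithinAt (fun x => δ * (x - a)) δ (Icc a b) x := by
    intro x _
    simpa using (((hasDerivAt_id x).sub_const a).const_mul δ).hasDerivWithinAt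
  have key := image_le_of_deriv_right_lt_deriv_boundary' (cont_of (f' := fun _ => δ) hl)
    (right_deriv (f' := fun _ => δ) hl) (by simp [h0]) (cont_of hd) (right_deriv hd) (by
      intro x hx he
      have hx' : x ∈ Icc a b := ⟨hx.1, hx.2.le⟩
      have h1 := F_lip (hp x hx') (hq x hx') (ht x hx') (θ x) (η x)
      have h2 : (mu - lam) * m ≤ (mu - lam) * ρ x :=
        mul_le_mul_of_nonneg_left (hρ x hx') (sub_pos.2 hlm).le
      rw [← he, abs_of_nonneg (mul_nonneg hδ.le (sub_nonneg.2 hx.1))] at h1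
      have h3 : 4 * M * (δ * (x - a)) ≤ 4 * M * (δ * (b - a)) := by
        have := hx.2
        gcongr
      have h4 := (abs_le.1 h1).1
      nlinarith) mb
  have : 0 < δ * (b - a) := mul_pos hδ hba
  linarith

/-- Gronwall estimate for the phase in the spectral parameter. -/
lemma phase_dist {a b : ℝ} (hab : a < b) {p q t ρ : ℝ → ℝ} {M : ℝ}
    (hp : ∀ x ∈ Icc a b, |p x| ≤ M) (hq : ∀ x ∈ Icc a b, |q x| ≤ M)
    (ht : ∀ x ∈ Icc a b, |t x| ≤ M) (hρ : ∀ x ∈ Icc a b, |ρ x| ≤ M)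
    {lam mu : ℝ} {θ η : ℝ → ℝ}
    (hθ : ∀ x ∈ Icc a b, HasDerivWithinAt θ (F p q t x (θ x) - lam * ρ x) (Icc a b) x)
    (hη : ∀ x ∈ Icc a b, HasDerivWithinAt η (F p q t x (η x) - mu * ρ x) (Icc a b) x)
    (h0 : θ a = η a) : |θ b - η b| ≤ gronwallBound 0 (4 * M) (|lam - mu| * M) (b - a) := by
  have mb : b ∈ Icc a b := right_mem_Icc.2 hab.le
  have hd : ∀ x ∈ Icc a b, HasDerivWithinAt (fun x => θ x - η x)
      ((F p q t x (θ x) - lam * ρ x) - (F p q t x (η x) - mu * ρ x)) (Icc a b) x :=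
    fun x hx => (hθ x hx).fun_sub (hη x hx)
  refine norm_le_gronwallBound_of_norm_deriv_right_le (cont_of hd) (right_deriv hd)
    (by simp [h0]) ?_ b mb
  intro x hx
  have hx' : x ∈ Icc a b := ⟨hx.1, hx.2.le⟩
  have h1 := F_lip (hp x hx') (hq x hx') (ht x hx') (θ x) (η x)
  have h2 : |(lam - mu) * ρ x| ≤ |lam - mu| * M := by
    rw [abs_mul]; exact mul_le_mul_of_nonneg_left (hρ x hx') (abs_nonneg _)
  simp only [Real.norm_eq_abs]
  calc _ = |(F p q t x (θ x) - F p q t x (η x)) - (lam - mu) * ρ x| := by congr 1; ring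
    _ ≤ |F p q t x (θ x) - F p q t x (η x)| + |(lam - mu) * ρ x| := abs_sub _ _
    _ ≤ _ := add_le_add h1 h2

end DiracAux

/-- The set of eigenvalues of the Dirac-type boundary-value problem is countably
infinite. -/
theorem dirac_eigenvalues_countably_infinite
    (a b : ℝ) (hab : a < b)
    (p q t ρ : ℝ → ℝ)
    (hp : ContDiffOn ℝ 1 p (Set.Icc a b)) (hq : ContDiffOn ℝ 1 q (Set.Icc a b))
    (ht : ContDiffOn ℝ 1 t (Set.Icc a b)) (hρ : ContDiffOn ℝ 1 ρ (Set.Icc a b))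
    (hρpos : ∀ x ∈ Set.Icc a b, 0 < ρ x)
    (α β : ℝ) (hα : α ∈ Set.Ico 0 (2 * Real.pi)) (hβ : β ∈ Set.Ico 0 (2 * Real.pi)) :
    {lam : ℝ | IsDiracEigenvalue a b p q t ρ α β lam}.Infinite ∧
    {lam : ℝ | IsDiracEigenvalue a b p q t ρ α β lam}.Countable := by
  have ma : a ∈ Icc a b := left_mem_Icc.2 hab.le
  have mb : b ∈ Icc a b := right_mem_Icc.2 hab.le
  have cp := hp.continuousOn
  have cq := hq.continuousOn
  have ct := ht.continuousOn
  have cρ := hρ.continuousOn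
  obtain ⟨M1, h1⟩ := isCompact_Icc.exists_bound_of_continuousOn cp
  obtain ⟨M2, h2⟩ := isCompact_Icc.exists_bound_of_continuousOn cq
  obtain ⟨M3, h3⟩ := isCompact_Icc.exists_bound_of_continuousOn ct
  obtain ⟨M4, h4⟩ := isCompact_Icc.exists_bound_of_continuousOn cρ
  obtain ⟨M, hM1, hM2, hM3, hM4⟩ : ∃ M, M1 ≤ M ∧ M2 ≤ M ∧ M3 ≤ M ∧ M4 ≤ M :=
    ⟨max (max M1 M2) (max M3 M4), by simp, by simp, by simp, by simp⟩
  have bp : ∀ x ∈ Icc a b, |p x| ≤ M := fun x hx => (h1 x hx).trans hM1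
  have bq : ∀ x ∈ Icc a b, |q x| ≤ M := fun x hx => (h2 x hx).trans hM2
  have bt : ∀ x ∈ Icc a b, |t x| ≤ M := fun x hx => (h3 x hx).trans hM3
  have bρ : ∀ x ∈ Icc a b, |ρ x| ≤ M := fun x hx => (h4 x hx).trans hM4
  have hM : 0 ≤ M := (abs_nonneg _).trans (bp a ma)
  obtain ⟨m, hm, bm⟩ : ∃ m, 0 < m ∧ ∀ x ∈ Icc a b, m ≤ ρ x := by
    obtain ⟨x₀, hx₀, hmin⟩ := isCompact_Icc.exists_isMinOn ⟨a, ma⟩ cρ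
    exact ⟨ρ x₀, hρpos x₀ hx₀, fun x hx => hmin hx⟩
  have hba : 0 < b - a := sub_pos.2 hab
  have ex : ∀ y lam : ℝ, ∃ θ : ℝ → ℝ, θ a = y ∧ ∀ x ∈ Icc a b,
      HasDerivWithinAt θ (DiracAux.F p q t x (θ x) - lam * ρ x) (Icc a b) x := by
    intro y lam
    refine DiracAux.exists_sol hab (fun x u => DiracAux.F p q t x u - lam * ρ x) (4 * M)
      (3 * M + |lam| * M) (by positivity) (by positivity) ?_ ?_ ?_ y
    · intro x hx u w
      have := DiracAux.F_lip (bp x hx) (bq x hx) (bt x hx) u w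
      simpa using this
    · intro u
      unfold DiracAux.F
      fun_prop
    · intro x hx u
      refine (abs_sub _ _).trans (add_le_add
        (DiracAux.F_bd (bp x hx) (bq x hx) (bt x hx) u) ?_)
      rw [abs_mul]
      exact mul_le_mul_of_nonneg_left (bρ x hx) (abs_nonneg _)
  choose θ hθa hθ using ex (α + Real.pi / 2)
  choose η hηa hη using ex α
  have iff : ∀ lam, IsDiracEigenvalue a b p q t ρ α β lam ↔ Real.cos (θ lam b - β) = 0 :=
    fun lam => DiracAux.eigen_iff hab cp cq ct cρ (hθ lam) (hη lam) (hθa lam) (hηa lam)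
  have anti : StrictAnti (fun lam => θ lam b) := by
    intro lam mu hlm
    exact DiracAux.phase_lt hab hm bp bq bt bm hlm (hθ lam) (hθ mu) (by rw [hθa, hθa])
  have cont : Continuous (fun lam => θ lam b) := by
    rw [continuous_iff_continuousAt]
    intro lam
    unfold ContinuousAt
    rw [tendsto_iff_dist_tendsto_zero]
    have hg : Filter.Tendsto (fun mu : ℝ => gronwallBound 0 (4 * M) (|mu - lam| * M) (b - a))
        (nhds lam) (nhds 0) := by
      have hc : Continuous
          (fun mu : ℝ => gronwallBound 0 (4 * M) (|mu - lam| * M) (b - a)) :=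
        (gronwallBound_continuous_ε 0 (4 * M) (b - a)).comp (by fun_prop)
      have := hc.tendsto lam
      simpa [gronwallBound_ε0_δ0] using this
    exact squeeze_zero (fun _ => dist_nonneg) (fun mu => DiracAux.phase_dist hab bp bq bt bρ
      (hθ mu) (hθ lam) (by rw [hθa, hθa])) hg
  have lin : ∀ c y : ℝ, ∀ x ∈ Icc a b,
      HasDerivWithinAt (fun x => y + c * (x - a)) c (Icc a b) x := by
    intro c y x _
    simpa using ((((hasDerivAt_id x).sub_const a).const_mul c).const_add y).hasDerivWithinAt
  have top : Filter.Tendsto (fun lam => θ lam b) Filter.atTop Filter.atBot := by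
    have hl : Filter.Tendsto (fun lam : ℝ => (α + Real.pi / 2 + 3 * M * (b - a))
        + (-(m * (b - a))) * lam) Filter.atTop Filter.atBot :=
      Filter.tendsto_atBot_add_const_left _ _
        (Filter.tendsto_id.const_mul_atTop_of_neg (by nlinarith [mul_pos hm hba]))
    refine Filter.tendsto_atBot_mono' _ ?_ hl
    filter_upwards [Filter.eventually_ge_atTop 0] with lam hlam
    have := DiracAux.compare hab (hθ lam) (lin (3 * M - lam * m) (α + Real.pi / 2))
      (by simp [hθa]) (by
        intro x hx
        have h1 := (abs_le.1 (DiracAux.F_bd (bp x hx) (bq x hx) (bt x hx) (θ lam x))).2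
        have h2 := mul_le_mul_of_nonneg_left (bm x hx) hlam
        linarith)
    linarith
  have bot : Filter.Tendsto (fun lam => θ lam b) Filter.atBot Filter.atTop := by
    have hl : Filter.Tendsto (fun lam : ℝ => (α + Real.pi / 2 - 3 * M * (b - a))
        + (-(m * (b - a))) * lam) Filter.atBot Filter.atTop :=
      Filter.tendsto_atTop_add_const_left _ _
        (Filter.tendsto_id.const_mul_atBot_of_neg (by nlinarith [mul_pos hm hba]))
    refine Filter.tendsto_atTop_mono' _ ?_ hl
    filter_upwards [Filter.eventually_le_atBot 0] with lam hlam
    have := DiracAux.compare hab (lin (-(3 * M) - lam * m) (α + Real.pi / 2)) (hθ lam)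
      (by simp [hθa]) (by
        intro x hx
        have h1 := (abs_le.1 (DiracAux.F_bd (bp x hx) (bq x hx) (bt x hx) (θ lam x))).1
        have h2 := mul_le_mul_of_nonpos_left (bm x hx) hlam
        linarith)
    linarith
  have surj := cont.surjective' bot top
  constructor
  · choose L hL using fun k : ℕ => surj (β + (Real.pi / 2 + k * Real.pi))
    refine Set.infinite_of_injective_forall_mem (f := L) ?_ ?_
    · intro j k hjk
      have h1 := hL j
      have h2 := hL k
      rw [hjk] at h1
      simp only at h1 h2
      have h3 : (j : ℝ) * Real.pi = k * Real.pi := by linarith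
      exact_mod_cast mul_right_cancel₀ Real.pi_ne_zero h3
    · intro k
      rw [Set.mem_ofPred_eq, iff, Real.cos_eq_zero_iff]
      refine ⟨k, ?_⟩
      have := hL k
      simp only at this
      rw [this]
      push_cast
      ring
  · have hc : (Set.range fun k : ℤ => β + (2 * k + 1) * Real.pi / 2).Countable :=
      Set.countable_range _
    refine (hc.preimage_of_injOn (f := fun lam => θ lam b) anti.injective.injOn).mono ?_
    intro lam hlam
    rw [Set.mem_ofPred_eq, iff, Real.cos_eq_zero_iff] at hlam
    obtain ⟨k, hk⟩ := hlam
    exact ⟨k, by simp only; linarith⟩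
end
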